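/- arXiv:2403.17193 — 2 statements merged into one kernel-verified Lean document; each statement's English description precedes it below -/
import Mathlib

section
/- Every nonzero 2-dimensional Novikov–Poisson algebra (N, ·, ∘) over ℂ is isomorphic to one of the following algebras, given on a basis e1, e2 (all unlisted products of basis elements, other than those forced by commutativity of ·, are zero): with · ≡ 0: the Novikov algebras N01: e1∘e1 = e2; N02: e2∘e1 = −e1; N03: e1∘e1 = e1, e2∘e2 = e2; N04: e1∘e1 = e1; N05: e1∘e2 = e1, e2∘e2 = e1 + e2; N06^γ: e1∘e2 = e1, e2∘e1 = γ·e1, e2∘e2 = e2; and (α, β ∈ ℂ): N07^{α,β}: e1·e1 = e1, e2·e2 = e2, e1∘e1 = α·e1, e2∘e2 = β·e2; N08^{α,β}: e1·e1 = e1, e1·e2 = e2, e1∘e1 = α·e1 + e2, e1∘e2 = β·e2, e2∘e1 = α·e2; N09^{α,β}: e1·e1 = e1, e1·e2 = e2, e1∘e1 = α·e1, e1∘e2 = β·e2, e2∘e1 = α·e2; N10^α: e1·e1 = e1, e1∘e1 = α·e1, e2∘e2 = e2; N11^α: e1·e1 = e1, e1∘e1 = α·e1; N12^α: e1·e1 =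 e2, e1∘e1 = α·e1, e1∘e2 = e2, e2∘e1 = α·e2; N13^α: e1·e1 = e2, e1∘e1 = e1 + α·e2, e2∘e1 = e2; N14^α: e1·e1 = e2, e1∘e1 = α·e2. Moreover, the only nontrivial isomorphism among the listed algebras N07–N14 is N07^{α,β} ≅ N07^{β,α}. -/
noncomputable section

/-- The 2-dimensional complex vector space. -/
abbrev V2 : Type := Fin 2 → ℂ

/-- The bilinear multiplication on `V2` determined by a table of structure constants:
`c i j` is the product of the `i`-th and `j`-th basis vectors. -/
def tm (c : Fin 2 → Fin 2 → V2) : V2 → V2 → V2 :=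
  fun x y => ∑ i, ∑ j, (x i * y j) • c i j

/-- Multiplication table with the given values of `e1*e1`, `e1*e2`, `e2*e1`, `e2*e2`. -/
def tbl (a b c d : V2) : Fin 2 → Fin 2 → V2 := ![![a, b], ![c, d]]

/-- The zero multiplication on `V2`. -/
def zm : V2 → V2 → V2 := fun _ _ => 0

/-- Isomorphism of algebras with one multiplication: a ℂ-linear bijection preserving
the multiplication. -/
def Iso1 {A : Type*} [AddCommGroup A] [Module ℂ A] {B : Type*} [AddCommGroup B]
    [Module ℂ B] (μ : A → A → A) (ν : B → B → B) : Prop :=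
  ∃ φ : A ≃ₗ[ℂ] B, ∀ x y, φ (μ x y) = ν (φ x) (φ y)

/-- Isomorphism of algebras with two multiplications: a ℂ-linear bijection preserving
both multiplications. -/
def Iso2 {A : Type*} [AddCommGroup A] [Module ℂ A] {B : Type*} [AddCommGroup B]
    [Module ℂ B] (μ₁ μ₂ : A → A → A) (ν₁ ν₂ : B → B → B) : Prop :=
  ∃ φ : A ≃ₗ[ℂ] B,
    (∀ x y, φ (μ₁ x y) = ν₁ (φ x) (φ y)) ∧ (∀ x y, φ (μ₂ x y) = ν₂ (φ x) (φ y))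

/-- The commutative associative algebra A01: `e1·e1 = e1`, `e2·e2 = e2`. -/
def cA01 : Fin 2 → Fin 2 → V2 := tbl ![1,0] 0 0 ![0,1]

/-- The commutative associative algebra A02: `e1·e1 = e1`, `e1·e2 = e2·e1 = e2`. -/
def cA02 : Fin 2 → Fin 2 → V2 := tbl ![1,0] ![0,1] ![0,1] 0

/-- The commutative associative algebra A03: `e1·e1 = e1`. -/
def cA03 : Fin 2 → Fin 2 → V2 := tbl ![1,0] 0 0 0

/-- The commutative associative algebra A04: `e1·e1 = e2`. -/
def cA04 : Fin 2 → Fin 2 → V2 := tbl ![0,1] 0 0 0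

/-- The nonzero 2-dimensional Novikov algebras N01–N05 and the family N06^γ,
indexed by `Fin 5 ⊕ ℂ`. -/
def novAlg : Fin 5 ⊕ ℂ → Fin 2 → Fin 2 → V2
  | Sum.inl i => ![tbl ![0,1] 0 0 0,          -- N01
                   tbl 0 0 ![-1,0] 0,         -- N02
                   tbl ![1,0] 0 0 ![0,1],     -- N03
                   tbl ![1,0] 0 0 0,          -- N04
                   tbl 0 ![1,0] 0 ![1,1]] i   -- N05
  | Sum.inr γ => tbl 0 ![1,0] ![γ,0] ![0,1]   -- N06^γ

/-- Index of the Novikov–Poisson algebras N07–N14 with nontrivial commutative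
associative multiplication. -/
inductive NPIdx : Type
  | n07 (α β : ℂ)
  | n08 (α β : ℂ)
  | n09 (α β : ℂ)
  | n10 (α : ℂ)
  | n11 (α : ℂ)
  | n12 (α : ℂ)
  | n13 (α : ℂ)
  | n14 (α : ℂ)

/-- The commutative associative multiplication of N07–N14. -/
def npMul : NPIdx → Fin 2 → Fin 2 → V2
  | .n07 _ _ => cA01
  | .n08 _ _ => cA02
  | .n09 _ _ => cA02
  | .n10 _ => cA03
  | .n11 _ => cA03
  | .n12 _ => cA04
  | .n13 _ => cA04
  | .n14 _ => cA04

/-- The Novikov multiplication of N07–N14. -/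
def npCirc : NPIdx → Fin 2 → Fin 2 → V2
  | .n07 α β => tbl ![α,0] 0 0 ![0,β]
  | .n08 α β => tbl ![α,1] ![0,β] ![0,α] 0
  | .n09 α β => tbl ![α,0] ![0,β] ![0,α] 0
  | .n10 α => tbl ![α,0] 0 0 ![0,1]
  | .n11 α => tbl ![α,0] 0 0 0
  | .n12 α => tbl ![α,0] ![0,1] ![0,α] 0
  | .n13 α => tbl ![1,α] 0 ![0,1] 0
  | .n14 α => tbl ![0,α] 0 0 0

/-!
Right multiplications of a Novikov algebra commute, so over `ℂ` they have a common eigenvector.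
Completing it to a basis leaves six structure constants subject to a few relations, and this
classifies the Novikov algebras; the commutative associative algebras A01–A04 are the commutative
ones among them. If `·` has a unit `e`, then `x ∘ y = x · (e ∘ y)`, where `y ↦ e ∘ y` is a
derivation up to multiplication by `e ∘ e`; this determines the compatible `∘` on A01 and A02, and
the identities on basis vectors do so on A03 and A04. The few automorphisms of A01–A04 then decide
which of these Novikov–Poisson algebras are isomorphic.
-/

section Isomorphisms

variable {A B C : Type*} [AddCommGroup A] [Module ℂ A] [AddCommGroup B] [Module ℂ B]
  [AddCommGroup C] [Module ℂ C]

theorem Iso1.symm {μ : A → A → A} {ν : B → B → B} : Iso1 μ ν → Iso1 ν μ := by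
  rintro ⟨φ, h⟩
  exact ⟨φ.symm, fun x y => φ.injective (by simp [h])⟩

theorem Iso1.trans {μ : A → A → A} {ν : B → B → B} {ρ : C → C → C} :
    Iso1 μ ν → Iso1 ν ρ → Iso1 μ ρ := by
  rintro ⟨φ, hφ⟩ ⟨ψ, hψ⟩
  exact ⟨φ.trans ψ, fun x y => by simp [hφ, hψ]⟩

theorem Iso2.trans {μ₁ μ₂ : A → A → A} {ν₁ ν₂ : B → B → B} {ρ₁ ρ₂ : C → C → C} :
    Iso2 μ₁ μ₂ ν₁ ν₂ → Iso2 ν₁ ν₂ ρ₁ ρ₂ → Iso2 μ₁ μ₂ ρ₁ ρ₂ := by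
  rintro ⟨φ, hφ₁, hφ₂⟩ ⟨ψ, hψ₁, hψ₂⟩
  exact ⟨φ.trans ψ, fun x y => by simp [hφ₁, hψ₁], fun x y => by simp [hφ₂, hψ₂]⟩

theorem Iso2.iso1_left {μ₁ μ₂ : A → A → A} {ν₁ ν₂ : B → B → B} :
    Iso2 μ₁ μ₂ ν₁ ν₂ → Iso1 μ₁ ν₁ :=
  fun ⟨φ, hφ, _⟩ => ⟨φ, hφ⟩

end Isomorphisms

section Identities

/-- The two identities of a Novikov algebra: left symmetry of the associator and commutativity of
right multiplications. -/
structure IsNovikov {A : Type*} [AddCommGroup A] (f : A → A → A) : Prop where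
  left_symm : ∀ x y z, f (f x y) z - f x (f y z) = f (f y x) z - f y (f x z)
  right_comm : ∀ x y z, f (f x y) z = f (f x z) y

/-- The two identities relating the commutative associative multiplication `mul` and the Novikov
multiplication `circ` of a Novikov–Poisson algebra. -/
structure IsPoissonCompatible {A : Type*} [AddCommGroup A] (mul circ : A → A → A) : Prop where
  circ_mul : ∀ x y z, circ (mul x y) z = mul x (circ y z)
  mul_circ_sub : ∀ x y z,
    mul (circ x y) z - mul (circ y x) z = circ x (mul y z) - circ y (mul x z)

theorem isNovikov_of_comm_of_assoc {A : Type*} [AddCommGroup A] {f : A → A → A}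
    (hcomm : ∀ x y, f x y = f y x) (hassoc : ∀ x y z, f (f x y) z = f x (f y z)) :
    IsNovikov f where
  left_symm x y z := by simp [hassoc]
  right_comm x y z := by rw [hassoc, hcomm y z, ← hassoc]

variable {A B : Type*} [AddCommGroup A] [Module ℂ A] [AddCommGroup B] [Module ℂ B]

theorem IsNovikov.of_iso1 {μ : A → A → A} {ν : B → B → B} (hμ : IsNovikov μ) (h : Iso1 μ ν) :
    IsNovikov ν := by
  obtain ⟨φ, hφ⟩ := h.symm
  constructor <;> intro x y z <;> apply φ.injective
  · simpa only [map_sub, hφ] using hμ.left_symm (φ x) (φ y) (φ z)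
  · simpa only [hφ] using hμ.right_comm (φ x) (φ y) (φ z)

theorem IsPoissonCompatible.of_iso2 {μ₁ μ₂ : A → A → A} {ν₁ ν₂ : B → B → B}
    (hμ : IsPoissonCompatible μ₁ μ₂) (h : Iso2 μ₁ μ₂ ν₁ ν₂) : IsPoissonCompatible ν₁ ν₂ := by
  obtain ⟨φ, hφ₁, hφ₂⟩ := h
  constructor <;> intro x y z <;> apply φ.symm.injective
  all_goals
    obtain ⟨x, rfl⟩ := φ.surjective x
    obtain ⟨y, rfl⟩ := φ.surjective y
    obtain ⟨z, rfl⟩ := φ.surjective z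
  · simpa only [← hφ₁, ← hφ₂, φ.symm_apply_apply] using hμ.circ_mul x y z
  · simpa only [← hφ₁, ← hφ₂, ← map_sub, φ.symm_apply_apply] using hμ.mul_circ_sub x y z

section Unital

variable {R : Type*} [AddCommGroup R] {mul circ : R → R → R} {e : R}

theorem IsPoissonCompatible.circ_eq_mul_circ_unit (h : IsPoissonCompatible mul circ)
    (he : ∀ x, mul x e = x) (x y : R) : circ x y = mul x (circ e y) := by
  rw [← h.circ_mul, he]

/-- Hence `y ↦ e ∘ y - y · (e ∘ e)` is a derivation of a unital commutative associative algebra. -/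
theorem IsPoissonCompatible.circ_unit_mul (h : IsPoissonCompatible mul circ)
    (he : ∀ x, mul x e = x) (he' : ∀ x, mul e x = x) (y z : R) :
    circ e (mul y z) = mul (circ e y) z + mul y (circ e z) - mul (mul y (circ e e)) z := by
  have key := h.mul_circ_sub e y z
  rw [he', h.circ_eq_mul_circ_unit he y e, h.circ_eq_mul_circ_unit he y z] at key
  rw [sub_eq_iff_eq_add.1 key.symm]
  abel

end Unital

end Identities

section Tables

open scoped Matrix

theorem tm_apply (c : Fin 2 → Fin 2 → V2) (x y : V2) (k : Fin 2) :
    tm c x y k = x 0 * y 0 * c 0 0 k + x 0 * y 1 * c 0 1 k +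
      (x 1 * y 0 * c 1 0 k + x 1 * y 1 * c 1 1 k) := by
  simp [tm, Fin.sum_univ_two]

theorem tm_single (c : Fin 2 → Fin 2 → V2) (i j : Fin 2) :
    tm c (Pi.single i 1) (Pi.single j 1) = c i j := by
  ext k
  fin_cases i <;> fin_cases j <;> simp [tm_apply]

/-- The matrix `P` describes a homomorphism from the algebra with multiplication table `c` to the
one with table `c'`: it sends the `i`-th basis vector to the `i`-th row of `P`, so that linear maps
act by `x ↦ x ᵥ* P`. -/
def IsTableHom (P : Matrix (Fin 2) (Fin 2) ℂ) (c c' : Fin 2 → Fin 2 → V2) : Prop :=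
  ∀ i j, c i j ᵥ* P = tm c' (P i) (P j)

theorem isTableHom_iff_forall_entry {P : Matrix (Fin 2) (Fin 2) ℂ} {c c' : Fin 2 → Fin 2 → V2} :
    IsTableHom P c c' ↔
      ∀ i j k, c i j 0 * P 0 k + c i j 1 * P 1 k = tm c' (P i) (P j) k := by
  simp [IsTableHom, funext_iff, Matrix.vecMul, dotProduct, Fin.sum_univ_two]

theorem isTableHom_iff_forall_vecMul {P : Matrix (Fin 2) (Fin 2) ℂ} {c c' : Fin 2 → Fin 2 → V2} :
    IsTableHom P c c' ↔ ∀ x y : V2, tm c x y ᵥ* P = tm c' (x ᵥ* P) (y ᵥ* P) := by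
  constructor
  · intro h x y
    ext k
    have entry (i j : Fin 2) := isTableHom_iff_forall_entry.1 h i j k
    simp only [tm_apply] at entry
    simp only [Matrix.vecMul, dotProduct, Fin.sum_univ_two, tm_apply]
    linear_combination x 0 * y 0 * entry 0 0 + x 0 * y 1 * entry 0 1 + x 1 * y 0 * entry 1 0 +
      x 1 * y 1 * entry 1 1
  · intro h i j
    have := h (Pi.single i 1) (Pi.single j 1)
    rwa [tm_single, Matrix.single_one_vecMul, Matrix.single_one_vecMul] at this

theorem zero_eq_vecCons : (0 : V2) = ![0, 0] := by
  ext k; fin_cases k <;> rfl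

theorem isTableHom_tbl_iff {a b a' b' u₀ u₁ v₀ v₁ w₀ w₁ z₀ z₁ u₀' u₁' v₀' v₁' w₀' w₁' z₀' z₁' : ℂ} :
    IsTableHom !![a, b; a', b'] (tbl ![u₀, u₁] ![v₀, v₁] ![w₀, w₁] ![z₀, z₁])
        (tbl ![u₀', u₁'] ![v₀', v₁'] ![w₀', w₁'] ![z₀', z₁']) ↔
      (u₀ * a + u₁ * a' = a * a * u₀' + a * b * v₀' + b * a * w₀' + b * b * z₀' ∧
        u₀ * b + u₁ * b' = a * a * u₁' + a * b * v₁' + b * a * w₁' + b * b * z₁') ∧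
      (v₀ * a + v₁ * a' = a * a' * u₀' + a * b' * v₀' + b * a' * w₀' + b * b' * z₀' ∧
        v₀ * b + v₁ * b' = a * a' * u₁' + a * b' * v₁' + b * a' * w₁' + b * b' * z₁') ∧
      (w₀ * a + w₁ * a' = a' * a * u₀' + a' * b * v₀' + b' * a * w₀' + b' * b * z₀' ∧
        w₀ * b + w₁ * b' = a' * a * u₁' + a' * b * v₁' + b' * a * w₁' + b' * b * z₁') ∧
      (z₀ * a + z₁ * a' = a' * a' * u₀' + a' * b' * v₀' + b' * a' * w₀' + b' * b' * z₀' ∧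
        z₀ * b + z₁ * b' = a' * a' * u₁' + a' * b' * v₁' + b' * a' * w₁' + b' * b' * z₁') := by
  simp [isTableHom_iff_forall_entry, Fin.forall_fin_two, tm_apply, tbl, ← add_assoc, and_assoc]

theorem exists_linearEquiv_iff_exists_matrix {p : (V2 → V2) → Prop} :
    (∃ φ : V2 ≃ₗ[ℂ] V2, p φ) ↔
      ∃ P : Matrix (Fin 2) (Fin 2) ℂ, P.det ≠ 0 ∧ p fun x => x ᵥ* P := by
  constructor
  · rintro ⟨φ, hφ⟩
    refine ⟨LinearMap.toMatrixRight' φ, ?_, ?_⟩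
    · refine Matrix.det_ne_zero_of_right_inverse (B := LinearMap.toMatrixRight' φ.symm) ?_
      rw [← LinearMap.toMatrixRight'_comp]
      simp
    · convert hφ using 1
      ext1 x
      exact LinearMap.congr_fun (LinearMap.toMatrixRight'.symm_apply_apply φ.toLinearMap) x
  · rintro ⟨P, hP, hp⟩
    have hP : IsUnit P.det := hP.isUnit
    exact ⟨Matrix.toLinearEquivRight'OfInv (P.nonsing_inv_mul hP) (P.mul_nonsing_inv hP), hp⟩

theorem iso1_tm_iff {c c' : Fin 2 → Fin 2 → V2} :
    Iso1 (tm c) (tm c') ↔ ∃ P : Matrix (Fin 2) (Fin 2) ℂ, P.det ≠ 0 ∧ IsTableHom P c c' := by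
  simp only [isTableHom_iff_forall_vecMul]
  exact exists_linearEquiv_iff_exists_matrix
    (p := fun φ => ∀ x y, φ (tm c x y) = tm c' (φ x) (φ y))

theorem iso2_tm_iff {c d c' d' : Fin 2 → Fin 2 → V2} :
    Iso2 (tm c) (tm d) (tm c') (tm d') ↔
      ∃ P : Matrix (Fin 2) (Fin 2) ℂ, P.det ≠ 0 ∧ IsTableHom P c c' ∧ IsTableHom P d d' := by
  simp only [isTableHom_iff_forall_vecMul]
  exact exists_linearEquiv_iff_exists_matrix
    (p := fun φ => (∀ x y, φ (tm c x y) = tm c' (φ x) (φ y)) ∧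
      ∀ x y, φ (tm d x y) = tm d' (φ x) (φ y))

end Tables

section StructureConstants

variable {N : Type*} [AddCommGroup N] [Module ℂ N]

/-- The structure constants of a bilinear multiplication with respect to a basis, as a
multiplication table on `V2`. -/
def structureTable (b : Module.Basis (Fin 2) ℂ N) (f : N →ₗ[ℂ] N →ₗ[ℂ] N) : Fin 2 → Fin 2 → V2 :=
  fun i j => b.equivFun (f (b i) (b j))

theorem equivFun_apply_apply_eq_tm (b : Module.Basis (Fin 2) ℂ N) (f : N →ₗ[ℂ] N →ₗ[ℂ] N)
    (x y : N) :
    b.equivFun (f x y) = tm (structureTable b f) (b.equivFun x) (b.equivFun y) := by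
  conv_lhs => rw [← b.sum_equivFun x, ← b.sum_equivFun y]
  simp only [map_sum, map_smul, LinearMap.sum_apply, LinearMap.smul_apply, Finset.smul_sum,
    smul_smul, tm, structureTable]
  rw [Finset.sum_comm]
  simp only [mul_comm]

theorem iso1_structureTable (b : Module.Basis (Fin 2) ℂ N) (f : N →ₗ[ℂ] N →ₗ[ℂ] N) :
    Iso1 (fun x y => f x y) (tm (structureTable b f)) :=
  ⟨b.equivFun, equivFun_apply_apply_eq_tm b f⟩

theorem Iso1.exists_iso2_tm {f : N →ₗ[ℂ] N →ₗ[ℂ] N} {c : Fin 2 → Fin 2 → V2}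
    (h : Iso1 (fun x y => f x y) (tm c)) (g : N →ₗ[ℂ] N →ₗ[ℂ] N) :
    ∃ d, Iso2 (fun x y => f x y) (fun x y => g x y) (tm c) (tm d) := by
  obtain ⟨φ, hφ⟩ := h
  refine ⟨structureTable (.ofEquivFun φ) g, φ, hφ, fun x y => ?_⟩
  simpa using equivFun_apply_apply_eq_tm (.ofEquivFun φ) g x y

theorem Iso1.table_comm {f : N → N → N} {c : Fin 2 → Fin 2 → V2} (h : Iso1 f (tm c))
    (hcomm : ∀ x y, f x y = f y x) (i j : Fin 2) : c i j = c j i := by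
  obtain ⟨φ, hφ⟩ := h.symm
  rw [← tm_single c i j, ← tm_single c j i]
  exact φ.injective (by rw [hφ, hφ, hcomm])

theorem Iso1.table_ne_zero {f : N → N → N} {c : Fin 2 → Fin 2 → V2} (h : Iso1 f (tm c))
    (hf : ∃ x y, f x y ≠ 0) : c ≠ 0 := by
  rintro rfl
  obtain ⟨φ, hφ⟩ := h
  obtain ⟨x, y, hxy⟩ := hf
  exact hxy (φ.injective (by rw [hφ, map_zero]; simp [tm]))

end StructureConstants

section Novikov

/-- If some member of the family is not scalar, one of its eigenspaces is a proper subspace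
invariant under all the others, so induction on the dimension applies. -/
theorem exists_common_eigenvector {ι K V : Type*} [Field K] [IsAlgClosed K] [AddCommGroup V]
    [Module K V] [FiniteDimensional K V] [Nontrivial V] (T : ι → Module.End K V)
    (hT : ∀ i j, Commute (T i) (T j)) : ∃ v ≠ 0, ∀ i, ∃ a : K, T i v = a • v := by
  induction hn : Module.finrank K V using Nat.strong_induction_on generalizing V with
  | _ n ih =>
    choose a ha using fun i => Module.End.exists_eigenvalue (T i)
    by_cases hscalar : ∀ i, Module.End.eigenspace (T i) (a i) = ⊤
    · obtain ⟨v, hv⟩ := exists_ne (0 : V)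
      exact ⟨v, hv, fun i => ⟨a i, Module.End.mem_eigenspace_iff.1 (hscalar i ▸ trivial)⟩⟩
    · push Not at hscalar
      obtain ⟨i, hi⟩ := hscalar
      let E := Module.End.eigenspace (T i) (a i)
      have hE (j : ι) : Set.MapsTo (T j) E E :=
        Module.End.mapsTo_genEigenspace_of_comm (hT i j) (a i) 1
      have : Nontrivial E := Submodule.nontrivial_iff_ne_bot.2 (ha i)
      obtain ⟨v, hv, hTv⟩ := ih _ (hn ▸ Submodule.finrank_lt hi) (fun j => (T j).restrict (hE j))
        (fun j k => LinearMap.ext fun x => Subtype.ext (LinearMap.congr_fun (hT j k) x)) rfl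
      refine ⟨v, by simpa using hv, fun j => ?_⟩
      obtain ⟨c, hc⟩ := hTv j
      exact ⟨c, congrArg Subtype.val hc⟩

theorem exists_rightIdeal_generator {K V : Type*} [Field K] [IsAlgClosed K] [AddCommGroup V]
    [Module K V] [FiniteDimensional K V] [Nontrivial V] (f : V →ₗ[K] V →ₗ[K] V)
    (hf : ∀ x y z, f (f x y) z = f (f x z) y) : ∃ v ≠ 0, ∀ x, ∃ a : K, f v x = a • v :=
  exists_common_eigenvector f.flip fun x y => LinearMap.ext fun z => hf z y x

theorem exists_basis_zero_eq {K V : Type*} [Field K] [AddCommGroup V] [Module K V]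
    (hdim : Module.finrank K V = 2) {v : V} (hv : v ≠ 0) :
    ∃ b : Module.Basis (Fin 2) K V, b 0 = v := by
  have := Module.finite_of_finrank_eq_succ hdim
  obtain ⟨w, hw⟩ := exists_linearIndependent_pair_of_one_lt_finrank (R := K)
    (by omega : 1 < Module.finrank K V) hv
  exact ⟨basisOfLinearIndependentOfCardEqFinrank hw (by simp [hdim]), by simp⟩

theorem IsNovikov.exists_iso1_tbl {N : Type*} [AddCommGroup N] [Module ℂ N]
    (hdim : Module.finrank ℂ N = 2) {f : N →ₗ[ℂ] N →ₗ[ℂ] N} (hf : IsNovikov fun x y => f x y) :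
    ∃ p q r s t u : ℂ,
      Iso1 (fun x y => f x y) (tm (tbl ![p, 0] ![q, 0] ![r, s] ![t, u])) := by
  have := Module.finite_of_finrank_eq_succ hdim
  have : Nontrivial N := Module.nontrivial_of_finrank_eq_succ hdim
  obtain ⟨v, hv, hideal⟩ := exists_rightIdeal_generator f hf.right_comm
  obtain ⟨b, rfl⟩ := exists_basis_zero_eq hdim hv
  let c := structureTable b f
  have hc (j : Fin 2) : c 0 j 1 = 0 := by
    obtain ⟨a, ha⟩ := hideal (b j)
    simp [c, structureTable, ha]
  have hctbl : c = tbl ![c 0 0 0, 0] ![c 0 1 0, 0] ![c 1 0 0, c 1 0 1] ![c 1 1 0, c 1 1 1] := by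
    ext i j k
    fin_cases i <;> fin_cases j <;> fin_cases k <;> simp [tbl, hc]
  have hiso : Iso1 (fun x y => f x y) (tm c) := iso1_structureTable b f
  rw [hctbl] at hiso
  exact ⟨_, _, _, _, _, _, hiso⟩

end Novikov

section NovikovClassification

theorem IsNovikov.tbl_relations {p q r s t u : ℂ}
    (h : IsNovikov (tm (tbl ![p, 0] ![q, 0] ![r, s] ![t, u]))) :
    s * (s - p) = 0 ∧ s * (u - q) = 0 ∧ p * (q - r) = s * (q + r) ∧
      q * (q - u) = t * (p + s) ∧ r * (q - u) = t * (p - s) := by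
  have h010 := h.left_symm (Pi.single 0 1) (Pi.single 1 1) (Pi.single 0 1)
  have h011 := h.left_symm (Pi.single 0 1) (Pi.single 1 1) (Pi.single 1 1)
  have h101 := h.right_comm (Pi.single 1 1) (Pi.single 0 1) (Pi.single 1 1)
  simp only [tm_single] at h010 h011 h101
  have hsp : 0 = s * s - p * s := by simpa [tm_apply, tbl] using congrFun h010 1
  have hsu : 0 = s * u - q * s := by simpa [tm_apply, tbl] using congrFun h011 1
  have hpqr : q * p - (r * p + s * q) = r * p + s * r - p * r := by
    simpa [tm_apply, tbl] using congrFun h010 0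
  have hqu : q * q - (t * p + u * q) = r * q + s * t - q * r := by
    simpa [tm_apply, tbl] using congrFun h011 0
  have hru : r * q + s * t = t * p + u * r := by
    simpa [tm_apply, tbl] using congrFun h101 0
  refine ⟨?_, ?_, ?_, ?_, ?_⟩
  · linear_combination -hsp
  · linear_combination -hsu
  · linear_combination hpqr
  · linear_combination hqu
  · linear_combination hru

theorem iso1_novAlg_of_scalar_right_mul {p q : ℂ} (hp : p ≠ 0) :
    Iso1 (tm (tbl ![p, 0] ![q, 0] ![0, p] ![0, q])) (tm (novAlg (.inr 0))) := by
  refine iso1_tm_iff.2 ⟨!![0, p; 1, q], by simpa, ?_⟩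
  simp only [novAlg, zero_eq_vecCons, isTableHom_tbl_iff]
  grind

theorem exists_iso1_novAlg_of_idempotent {p q t u : ℂ} (hp : p ≠ 0) (ht : q * (q - u) = t * p) :
    ∃ i, Iso1 (tm (tbl ![p, 0] ![q, 0] ![q, 0] ![t, u])) (tm (novAlg i)) := by
  by_cases hu : u = 0
  · refine ⟨.inl 3, iso1_tm_iff.2 ⟨!![p, 0; q, 1], by simpa, ?_⟩⟩
    simp only [novAlg, zero_eq_vecCons, Matrix.cons_val, isTableHom_tbl_iff]
    grind
  · refine ⟨.inl 2, iso1_tm_iff.2 ⟨!![p, 0; q, u], by simp [hp, hu], ?_⟩⟩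
    simp only [novAlg, zero_eq_vecCons, Matrix.cons_val, isTableHom_tbl_iff]
    grind

theorem exists_iso1_novAlg_of_nilpotent_quotient {r t : ℂ} (hne : r ≠ 0 ∨ t ≠ 0) :
    ∃ i, Iso1 (tm (tbl ![0, 0] ![0, 0] ![r, 0] ![t, 0])) (tm (novAlg i)) := by
  by_cases hr : r = 0
  · have ht : t ≠ 0 := hne.resolve_left (not_not_intro hr)
    refine ⟨.inl 0, iso1_tm_iff.2 ⟨!![0, t; t, 0], by simpa, ?_⟩⟩
    simp only [novAlg, zero_eq_vecCons, Matrix.cons_val, isTableHom_tbl_iff]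
    grind
  · refine ⟨.inl 1, iso1_tm_iff.2 ⟨!![r, 0; t, -r], by simpa, ?_⟩⟩
    simp only [novAlg, zero_eq_vecCons, Matrix.cons_val, isTableHom_tbl_iff]
    grind

theorem iso1_novAlg_of_annihilator {t u : ℂ} (hu : u ≠ 0) :
    Iso1 (tm (tbl ![0, 0] ![0, 0] ![0, 0] ![t, u])) (tm (novAlg (.inl 3))) := by
  refine iso1_tm_iff.2 ⟨!![0, u; u, -t], by simpa, ?_⟩
  simp only [novAlg, zero_eq_vecCons, Matrix.cons_val, isTableHom_tbl_iff]
  grind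

theorem exists_iso1_novAlg_of_right_unit {r t u : ℂ} (hu : u ≠ 0) :
    ∃ i, Iso1 (tm (tbl ![0, 0] ![u, 0] ![r, 0] ![t, u])) (tm (novAlg i)) := by
  by_cases hr : r = 0
  · by_cases ht : t = 0
    · refine ⟨.inr 0, iso1_tm_iff.2 ⟨!![1, 0; 0, u], by simpa, ?_⟩⟩
      simp only [novAlg, zero_eq_vecCons, isTableHom_tbl_iff]
      grind
    · refine ⟨.inl 4, iso1_tm_iff.2 ⟨!![u ^ 2 / t, 0; 0, u], by simp [hu, ht], ?_⟩⟩
      simp only [novAlg, zero_eq_vecCons, Matrix.cons_val, isTableHom_tbl_iff]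
      grind
  · refine ⟨.inr (r / u), iso1_tm_iff.2 ⟨!![r, 0; t, u], by simp [hr, hu], ?_⟩⟩
    simp only [novAlg, zero_eq_vecCons, isTableHom_tbl_iff]
    grind

theorem IsNovikov.exists_iso1_novAlg {N : Type*} [AddCommGroup N] [Module ℂ N]
    (hdim : Module.finrank ℂ N = 2) {f : N →ₗ[ℂ] N →ₗ[ℂ] N} (hf : IsNovikov fun x y => f x y)
    (hne : ∃ x y, f x y ≠ 0) : ∃ i, Iso1 (fun x y => f x y) (tm (novAlg i)) := by
  obtain ⟨p, q, r, s, t, u, hiso⟩ := hf.exists_iso1_tbl hdim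
  suffices ∃ i, Iso1 (tm (tbl ![p, 0] ![q, 0] ![r, s] ![t, u])) (tm (novAlg i)) from
    this.imp fun _ => hiso.trans
  obtain ⟨hsp, hsu, hpqr, hqu, hru⟩ := (hf.of_iso1 hiso).tbl_relations
  by_cases hs : s = 0
  · subst hs
    by_cases hp : p = 0
    · subst hp
      by_cases hu : u = 0
      · subst hu
        obtain rfl : q = 0 := by grind
        refine exists_iso1_novAlg_of_nilpotent_quotient ?_
        by_contra! hrt
        refine hiso.table_ne_zero hne ?_
        ext i j k
        fin_cases i <;> fin_cases j <;> fin_cases k <;> simp [tbl, hrt]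
      · by_cases hq : q = 0
        · subst hq
          obtain rfl : r = 0 := by grind
          exact ⟨_, iso1_novAlg_of_annihilator hu⟩
        · obtain rfl : q = u := by grind
          exact exists_iso1_novAlg_of_right_unit hu
    · obtain rfl : r = q := by grind
      exact exists_iso1_novAlg_of_idempotent hp (by simpa using hqu)
  · obtain rfl : p = s := by grind
    obtain rfl : q = u := by grind
    obtain rfl : r = 0 := by grind
    obtain rfl : t = 0 := by grind
    exact ⟨_, iso1_novAlg_of_scalar_right_mul hs⟩

theorem exists_iso1_npMul {N : Type*} [AddCommGroup N] [Module ℂ N]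
    (hdim : Module.finrank ℂ N = 2) {f : N →ₗ[ℂ] N →ₗ[ℂ] N}
    (hcomm : ∀ x y, f x y = f y x) (hassoc : ∀ x y z, f (f x y) z = f x (f y z))
    (hne : ∃ x y, f x y ≠ 0) :
    ∃ c ∈ ({cA01, cA02, cA03, cA04} : Set (Fin 2 → Fin 2 → V2)),
      Iso1 (fun x y => f x y) (tm c) := by
  obtain ⟨i, hi⟩ :=
    (isNovikov_of_comm_of_assoc (f := fun x y => f x y) hcomm hassoc).exists_iso1_novAlg hdim hne
  have h01 : novAlg i 0 1 0 = novAlg i 1 0 0 := by rw [hi.table_comm hcomm 0 1]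
  rcases i with i | γ
  · fin_cases i
    · exact ⟨cA04, by simp, hi⟩
    · simp [novAlg, tbl] at h01
    · exact ⟨cA01, by simp, hi⟩
    · exact ⟨cA03, by simp, hi⟩
    · simp [novAlg, tbl] at h01
  · obtain rfl : 1 = γ := by simpa [novAlg, tbl] using h01
    refine ⟨cA02, by simp, hi.trans (iso1_tm_iff.2 ⟨!![0, 1; 1, 0], by simp, ?_⟩)⟩
    simp only [novAlg, cA02, zero_eq_vecCons, isTableHom_tbl_iff]
    grind

end NovikovClassification

section CompatibleTables

/-- The Novikov tables `e1∘e1 = α e1`, `e2∘e2 = δ e2`, which are those compatible with A01 and with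
A03. -/
def diagTable (α δ : ℂ) : Fin 2 → Fin 2 → V2 := tbl ![α, 0] 0 0 ![0, δ]

/-- The Novikov tables `e1∘e1 = α e1 + ε e2`, `e1∘e2 = β e2`, `e2∘e1 = α e2`, which are those
compatible with A02 and with A04. -/
def triTable (α ε β : ℂ) : Fin 2 → Fin 2 → V2 := tbl ![α, ε] ![0, β] ![0, α] 0

variable {d : Fin 2 → Fin 2 → V2}

theorem IsPoissonCompatible.eq_diagTable_of_cA01 (h : IsPoissonCompatible (tm cA01) (tm d)) :
    d = diagTable (d 0 0 0) (d 1 1 1) := by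
  have one_mul (x : V2) : tm cA01 ![1, 1] x = x := by
    ext k; fin_cases k <;> simp [tm_apply, cA01, tbl]
  have mul_one (x : V2) : tm cA01 x ![1, 1] = x := by
    ext k; fin_cases k <;> simp [tm_apply, cA01, tbl]
  have hcirc (i j : Fin 2) : d i j = tm cA01 (Pi.single i 1) (tm d ![1, 1] (Pi.single j 1)) := by
    rw [← h.circ_eq_mul_circ_unit mul_one, tm_single]
  have idem (j : Fin 2) : tm cA01 (Pi.single j 1) (Pi.single j 1) = Pi.single j 1 := by
    ext k; fin_cases j <;> fin_cases k <;> simp [tm_apply, cA01, tbl]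
  have hleibniz (j : Fin 2) := h.circ_unit_mul mul_one one_mul (Pi.single j 1) (Pi.single j 1)
  simp only [idem] at hleibniz
  generalize tm d ![1, 1] = D at hcirc hleibniz
  have hD₀ : D (Pi.single 0 1) 1 = 0 := by
    simpa [tm_apply, cA01, tbl] using congrFun (hleibniz 0) 1
  have hD₁ : D (Pi.single 1 1) 0 = 0 := by
    simpa [tm_apply, cA01, tbl] using congrFun (hleibniz 1) 0
  ext i j k
  fin_cases i <;> fin_cases j <;> fin_cases k <;>
    simp [hcirc, tm_apply, cA01, diagTable, tbl, hD₀, hD₁]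

theorem IsPoissonCompatible.eq_triTable_of_cA02 (h : IsPoissonCompatible (tm cA02) (tm d)) :
    d = triTable (d 0 0 0) (d 0 0 1) (d 0 1 1) := by
  have one_mul (x : V2) : tm cA02 (Pi.single 0 1) x = x := by
    ext k; fin_cases k <;> simp [tm_apply, cA02, tbl]
  have mul_one (x : V2) : tm cA02 x (Pi.single 0 1) = x := by
    ext k; fin_cases k <;> simp [tm_apply, cA02, tbl]
  have hcirc (j : Fin 2) : d 1 j = tm cA02 (Pi.single 1 1) (d 0 j) := by
    rw [← tm_single d 0 j, ← h.circ_eq_mul_circ_unit mul_one, tm_single]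
  have hd01 : d 0 1 0 = 0 := by
    have hleibniz := h.circ_unit_mul mul_one one_mul (Pi.single 1 1) (Pi.single 1 1)
    simp only [tm_single] at hleibniz
    simpa [tm_apply, cA02, tbl, eq_comm (a := (0 : ℂ)), ← two_mul] using congrFun hleibniz 1
  ext i j k
  fin_cases i <;> fin_cases j <;> fin_cases k <;>
    simp [hcirc, tm_apply, cA02, triTable, tbl, hd01]

theorem IsPoissonCompatible.table_circ_mul {c : Fin 2 → Fin 2 → V2}
    (h : IsPoissonCompatible (tm c) (tm d)) (i j k : Fin 2) :
    tm d (c i j) (Pi.single k 1) = tm c (Pi.single i 1) (d j k) := by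
  simpa only [tm_single] using h.circ_mul (Pi.single i 1) (Pi.single j 1) (Pi.single k 1)

theorem IsPoissonCompatible.table_mul_circ_sub {c : Fin 2 → Fin 2 → V2}
    (h : IsPoissonCompatible (tm c) (tm d)) (i j k : Fin 2) :
    tm c (d i j) (Pi.single k 1) - tm c (d j i) (Pi.single k 1) =
      tm d (Pi.single i 1) (c j k) - tm d (Pi.single j 1) (c i k) := by
  simpa only [tm_single] using h.mul_circ_sub (Pi.single i 1) (Pi.single j 1) (Pi.single k 1)

theorem IsPoissonCompatible.eq_diagTable_of_cA03 (h : IsPoissonCompatible (tm cA03) (tm d)) :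
    d = diagTable (d 0 0 0) (d 1 1 1) := by
  have hd₀ (k : Fin 2) : d 0 k 1 = 0 := by
    have hentry := congrFun (h.table_circ_mul 0 0 k) 1
    fin_cases k <;> simpa [tm_apply, cA03, tbl] using hentry
  have hd₁ (k : Fin 2) : d 1 k 0 = 0 := by
    simpa [tm_apply, cA03, tbl, eq_comm] using congrFun (h.table_circ_mul 0 1 k) 0
  have hsub := h.table_mul_circ_sub 0 1 0
  have hd010 : d 0 1 0 = 0 := by
    simpa [tm_apply, cA03, tbl, hd₁] using congrFun hsub 0
  have hd101 : d 1 0 1 = 0 := by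
    simpa [tm_apply, cA03, tbl] using congrFun hsub 1
  ext i j k
  fin_cases i <;> fin_cases j <;> fin_cases k <;>
    simp [diagTable, tbl, hd₀, hd₁, hd010, hd101]

theorem IsPoissonCompatible.eq_triTable_of_cA04 (h : IsPoissonCompatible (tm cA04) (tm d)) :
    d = triTable (d 0 0 0) (d 0 0 1) (d 0 1 1) := by
  have hd₁ (k : Fin 2) : d 1 k = ![0, d 0 k 0] := by
    ext l
    have hentry := congrFun (h.table_circ_mul 0 0 k) l
    fin_cases k <;> fin_cases l <;> simpa [tm_apply, cA04, tbl] using hentry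
  have hd010 : d 0 1 0 = 0 := by
    have hentry : d 0 1 0 = -d 0 1 0 := by
      simpa [tm_apply, cA04, tbl, hd₁] using congrFun (h.table_mul_circ_sub 0 1 0) 1
    linear_combination hentry / 2
  ext i j k
  fin_cases i <;> fin_cases j <;> fin_cases k <;> simp [triTable, tbl, hd₁, hd010]

end CompatibleTables

section Criteria

variable {P : Matrix (Fin 2) (Fin 2) ℂ}

theorem isTableHom_cA01_iff (hP : P.det ≠ 0) :
    IsTableHom P cA01 cA01 ↔ P = !![1, 0; 0, 1] ∨ P = !![0, 1; 1, 0] := by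
  obtain ⟨a, b, a', b', rfl⟩ : ∃ a b a' b', P = !![a, b; a', b'] := ⟨_, _, _, _, P.eta_fin_two⟩
  simp only [cA01, zero_eq_vecCons, isTableHom_tbl_iff, Matrix.det_fin_two_of,
    EmbeddingLike.apply_eq_iff_eq, Matrix.vecCons_inj] at hP ⊢
  grind

theorem isTableHom_cA02_iff (hP : P.det ≠ 0) :
    IsTableHom P cA02 cA02 ↔ ∃ s, P = !![1, 0; 0, s] := by
  obtain ⟨a, b, a', b', rfl⟩ : ∃ a b a' b', P = !![a, b; a', b'] := ⟨_, _, _, _, P.eta_fin_two⟩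
  simp only [cA02, zero_eq_vecCons, isTableHom_tbl_iff, Matrix.det_fin_two_of,
    EmbeddingLike.apply_eq_iff_eq, Matrix.vecCons_inj] at hP ⊢
  grind

theorem isTableHom_cA03_iff (hP : P.det ≠ 0) :
    IsTableHom P cA03 cA03 ↔ ∃ s, P = !![1, 0; 0, s] := by
  obtain ⟨a, b, a', b', rfl⟩ : ∃ a b a' b', P = !![a, b; a', b'] := ⟨_, _, _, _, P.eta_fin_two⟩
  simp only [cA03, zero_eq_vecCons, isTableHom_tbl_iff, Matrix.det_fin_two_of,
    EmbeddingLike.apply_eq_iff_eq, Matrix.vecCons_inj] at hP ⊢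
  grind

theorem isTableHom_cA04_iff (hP : P.det ≠ 0) :
    IsTableHom P cA04 cA04 ↔ ∃ p q, P = !![p, q; 0, p ^ 2] := by
  obtain ⟨a, b, a', b', rfl⟩ : ∃ a b a' b', P = !![a, b; a', b'] := ⟨_, _, _, _, P.eta_fin_two⟩
  simp only [cA04, zero_eq_vecCons, isTableHom_tbl_iff, Matrix.det_fin_two_of,
    EmbeddingLike.apply_eq_iff_eq, Matrix.vecCons_inj] at hP ⊢
  grind

variable {α β δ ε α' β' δ' ε' : ℂ}

theorem isTableHom_diagTable_iff {s : ℂ} :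
    IsTableHom !![1, 0; 0, s] (diagTable α δ) (diagTable α' δ') ↔ α = α' ∧ δ * s = s * s * δ' := by
  simp only [diagTable, zero_eq_vecCons, isTableHom_tbl_iff]
  grind

theorem isTableHom_triTable_iff {p q s : ℂ} :
    IsTableHom !![p, q; 0, s] (triTable α ε β) (triTable α' ε' β') ↔
      (α * p = p * p * α' ∧ α * q + ε * s = p * p * ε' + p * q * β' + q * p * α') ∧
        β * s = p * s * β' ∧ α * s = s * p * α' := by
  simp only [triTable, zero_eq_vecCons, isTableHom_tbl_iff]
  grind

theorem iso2_cA01_diagTable_iff :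
    Iso2 (tm cA01) (tm (diagTable α β)) (tm cA01) (tm (diagTable α' β')) ↔
      (α = α' ∧ β = β') ∨ (α = β' ∧ β = α') := by
  have swap_iff : IsTableHom !![0, 1; 1, 0] (diagTable α β) (diagTable α' β') ↔
      α = β' ∧ β = α' := by
    simp only [diagTable, zero_eq_vecCons, isTableHom_tbl_iff]
    grind
  rw [iso2_tm_iff]
  constructor
  · rintro ⟨P, hP, hmul, hcirc⟩
    obtain rfl | rfl := (isTableHom_cA01_iff hP).1 hmul
    · exact .inl (by simpa using isTableHom_diagTable_iff.1 hcirc)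
    · exact .inr (swap_iff.1 hcirc)
  · rintro (h | h)
    · have hdet : !![(1 : ℂ), 0; 0, 1].det ≠ 0 := by simp
      exact ⟨_, hdet, (isTableHom_cA01_iff hdet).2 (.inl rfl),
        isTableHom_diagTable_iff.2 (by simpa using h)⟩
    · have hdet : !![(0 : ℂ), 1; 1, 0].det ≠ 0 := by simp
      exact ⟨_, hdet, (isTableHom_cA01_iff hdet).2 (.inr rfl), swap_iff.2 h⟩

theorem iso2_cA02_triTable_iff :
    Iso2 (tm cA02) (tm (triTable α ε β)) (tm cA02) (tm (triTable α' ε' β')) ↔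
      α = α' ∧ β = β' ∧ ∃ s ≠ 0, ε * s = ε' := by
  rw [iso2_tm_iff]
  constructor
  · rintro ⟨P, hP, hmul, hcirc⟩
    obtain ⟨s, rfl⟩ := (isTableHom_cA02_iff hP).1 hmul
    rw [isTableHom_triTable_iff] at hcirc
    rw [Matrix.det_fin_two_of] at hP
    grind
  · rintro ⟨rfl, rfl, s, hs, rfl⟩
    have hdet : !![1, 0; 0, s].det ≠ 0 := by simpa
    refine ⟨_, hdet, (isTableHom_cA02_iff hdet).2 ⟨s, rfl⟩, isTableHom_triTable_iff.2 ?_⟩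
    grind

theorem iso2_cA03_diagTable_iff :
    Iso2 (tm cA03) (tm (diagTable α δ)) (tm cA03) (tm (diagTable α' δ')) ↔
      α = α' ∧ ∃ s ≠ 0, δ = s * δ' := by
  rw [iso2_tm_iff]
  constructor
  · rintro ⟨P, hP, hmul, hcirc⟩
    obtain ⟨s, rfl⟩ := (isTableHom_cA03_iff hP).1 hmul
    rw [isTableHom_diagTable_iff] at hcirc
    rw [Matrix.det_fin_two_of] at hP
    have hs : s ≠ 0 := by grind
    exact ⟨hcirc.1, s, hs, by grind⟩
  · rintro ⟨rfl, s, hs, rfl⟩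
    have hdet : !![1, 0; 0, s].det ≠ 0 := by simpa
    refine ⟨_, hdet, (isTableHom_cA03_iff hdet).2 ⟨s, rfl⟩, isTableHom_diagTable_iff.2 ?_⟩
    grind

theorem iso2_cA04_triTable_iff :
    Iso2 (tm cA04) (tm (triTable α ε β)) (tm cA04) (tm (triTable α' ε' β')) ↔
      ∃ p ≠ 0, ∃ q, α = p * α' ∧ β = p * β' ∧ ε * p = ε' * p + β' * q := by
  rw [iso2_tm_iff]
  constructor
  · rintro ⟨P, hP, hmul, hcirc⟩
    obtain ⟨p, q, rfl⟩ := (isTableHom_cA04_iff hP).1 hmul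
    rw [isTableHom_triTable_iff] at hcirc
    rw [Matrix.det_fin_two_of] at hP
    have hp : p ≠ 0 := by grind
    exact ⟨p, hp, q, by grind⟩
  · rintro ⟨p, hp, q, rfl, rfl, h⟩
    have hdet : !![p, q; 0, p ^ 2].det ≠ 0 := by simpa
    refine ⟨_, hdet, (isTableHom_cA04_iff hdet).2 ⟨p, q, rfl⟩, isTableHom_triTable_iff.2 ?_⟩
    grind

end Criteria

section Invariants

/-- Existence of a left unit. It separates A01 and A02 from A03 and A04. -/
def HasLeftUnit {A : Type*} (f : A → A → A) : Prop :=
  ∃ e, ∀ x, f e x = x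

/-- Existence of a nonzero idempotent. It separates A03 from A04. -/
def HasNonzeroIdempotent {A : Type*} [Zero A] (f : A → A → A) : Prop :=
  ∃ x ≠ 0, f x x = x

/-- Existence of a nonzero element with square zero. It separates A02 from A01. -/
def HasNonzeroSquareZero {A : Type*} [Zero A] (f : A → A → A) : Prop :=
  ∃ x ≠ 0, f x x = 0

section Transport

variable {A B : Type*} [AddCommGroup A] [Module ℂ A] [AddCommGroup B] [Module ℂ B]
  {μ : A → A → A} {ν : B → B → B}

theorem HasLeftUnit.of_iso1 (hμ : HasLeftUnit μ) (h : Iso1 μ ν) : HasLeftUnit ν := by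
  obtain ⟨e, he⟩ := hμ
  obtain ⟨φ, hφ⟩ := h
  exact ⟨φ e, φ.surjective.forall.2 fun x => by rw [← hφ, he]⟩

theorem HasNonzeroIdempotent.of_iso1 (hμ : HasNonzeroIdempotent μ) (h : Iso1 μ ν) :
    HasNonzeroIdempotent ν := by
  obtain ⟨x, hx, hxx⟩ := hμ
  obtain ⟨φ, hφ⟩ := h
  exact ⟨φ x, φ.map_ne_zero_iff.2 hx, by rw [← hφ, hxx]⟩

theorem HasNonzeroSquareZero.of_iso1 (hμ : HasNonzeroSquareZero μ) (h : Iso1 μ ν) :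
    HasNonzeroSquareZero ν := by
  obtain ⟨x, hx, hxx⟩ := hμ
  obtain ⟨φ, hφ⟩ := h
  exact ⟨φ x, φ.map_ne_zero_iff.2 hx, by rw [← hφ, hxx, map_zero]⟩

end Transport

theorem hasLeftUnit_cA01 : HasLeftUnit (tm cA01) :=
  ⟨![1, 1], fun x => by ext k; fin_cases k <;> simp [tm_apply, cA01, tbl]⟩

theorem hasLeftUnit_cA02 : HasLeftUnit (tm cA02) :=
  ⟨![1, 0], fun x => by ext k; fin_cases k <;> simp [tm_apply, cA02, tbl]⟩

theorem not_hasLeftUnit_cA03 : ¬HasLeftUnit (tm cA03) := by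
  rintro ⟨e, he⟩
  simpa [tm_apply, cA03, tbl] using congrFun (he ![0, 1]) 1

theorem not_hasLeftUnit_cA04 : ¬HasLeftUnit (tm cA04) := by
  rintro ⟨e, he⟩
  simpa [tm_apply, cA04, tbl] using congrFun (he ![1, 0]) 0

theorem not_hasNonzeroSquareZero_cA01 : ¬HasNonzeroSquareZero (tm cA01) := by
  rintro ⟨x, hx, hxx⟩
  refine hx (funext <| Fin.forall_fin_two.2 ⟨?_, ?_⟩)
  · simpa [tm_apply, cA01, tbl] using congrFun hxx 0
  · simpa [tm_apply, cA01, tbl] using congrFun hxx 1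

theorem hasNonzeroSquareZero_cA02 : HasNonzeroSquareZero (tm cA02) :=
  ⟨![0, 1], by simp, by ext k; fin_cases k <;> simp [tm_apply, cA02, tbl]⟩

theorem hasNonzeroIdempotent_cA03 : HasNonzeroIdempotent (tm cA03) :=
  ⟨![1, 0], by simp, by ext k; fin_cases k <;> simp [tm_apply, cA03, tbl]⟩

theorem not_hasNonzeroIdempotent_cA04 : ¬HasNonzeroIdempotent (tm cA04) := by
  rintro ⟨x, hx, hxx⟩
  have hx₀ : x 0 = 0 := by simpa [tm_apply, cA04, tbl, eq_comm] using congrFun hxx 0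
  have hx₁ : x 1 = 0 := by simpa [tm_apply, cA04, tbl, hx₀, eq_comm] using congrFun hxx 1
  exact hx (funext <| Fin.forall_fin_two.2 ⟨hx₀, hx₁⟩)

theorem npMul_eq_of_iso1 {i j : NPIdx} (h : Iso1 (tm (npMul i)) (tm (npMul j))) :
    npMul i = npMul j := by
  have hunit : HasLeftUnit (tm (npMul i)) ↔ HasLeftUnit (tm (npMul j)) :=
    ⟨fun hi => hi.of_iso1 h, fun hj => hj.of_iso1 h.symm⟩
  have hidem : HasNonzeroIdempotent (tm (npMul i)) ↔ HasNonzeroIdempotent (tm (npMul j)) :=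
    ⟨fun hi => hi.of_iso1 h, fun hj => hj.of_iso1 h.symm⟩
  have hsq : HasNonzeroSquareZero (tm (npMul i)) ↔ HasNonzeroSquareZero (tm (npMul j)) :=
    ⟨fun hi => hi.of_iso1 h, fun hj => hj.of_iso1 h.symm⟩
  cases i <;> cases j <;> first
    | rfl
    | simp [npMul, hasLeftUnit_cA01, hasLeftUnit_cA02, not_hasLeftUnit_cA03,
        not_hasLeftUnit_cA04, not_hasNonzeroSquareZero_cA01, hasNonzeroSquareZero_cA02,
        hasNonzeroIdempotent_cA03, not_hasNonzeroIdempotent_cA04] at hunit hidem hsq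

end Invariants

section NovikovPoissonClassification

theorem npCirc_eq (i : NPIdx) : npCirc i =
    match i with
    | .n07 α β => diagTable α β
    | .n08 α β => triTable α 1 β
    | .n09 α β => triTable α 0 β
    | .n10 α => diagTable α 1
    | .n11 α => diagTable α 0
    | .n12 α => triTable α 0 1
    | .n13 α => triTable 1 α 0
    | .n14 α => triTable 0 α 0 := by
  cases i <;> simp only [npCirc, diagTable, triTable, zero_eq_vecCons]

theorem exists_iso2_np_of_cA01 (α δ : ℂ) :
    ∃ i, Iso2 (tm cA01) (tm (diagTable α δ)) (tm (npMul i)) (tm (npCirc i)) :=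
  ⟨.n07 α δ, iso2_cA01_diagTable_iff.2 (.inl ⟨rfl, rfl⟩)⟩

theorem exists_iso2_np_of_cA02 (α ε β : ℂ) :
    ∃ i, Iso2 (tm cA02) (tm (triTable α ε β)) (tm (npMul i)) (tm (npCirc i)) := by
  by_cases hε : ε = 0
  · exact ⟨.n09 α β, iso2_cA02_triTable_iff.2 ⟨rfl, rfl, 1, one_ne_zero, by simp [hε]⟩⟩
  · exact ⟨.n08 α β, iso2_cA02_triTable_iff.2 ⟨rfl, rfl, ε⁻¹, by simpa, by simp [hε]⟩⟩

theorem exists_iso2_np_of_cA03 (α δ : ℂ) :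
    ∃ i, Iso2 (tm cA03) (tm (diagTable α δ)) (tm (npMul i)) (tm (npCirc i)) := by
  simp only [npCirc_eq]
  by_cases hδ : δ = 0
  · exact ⟨.n11 α, iso2_cA03_diagTable_iff.2 ⟨rfl, 1, one_ne_zero, by simp [hδ]⟩⟩
  · exact ⟨.n10 α, iso2_cA03_diagTable_iff.2 ⟨rfl, δ, hδ, by simp⟩⟩

theorem exists_iso2_np_of_cA04 (α ε β : ℂ) :
    ∃ i, Iso2 (tm cA04) (tm (triTable α ε β)) (tm (npMul i)) (tm (npCirc i)) := by
  simp only [npCirc_eq]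
  by_cases hβ : β = 0
  · by_cases hα : α = 0
    · exact ⟨.n14 ε, iso2_cA04_triTable_iff.2 ⟨1, one_ne_zero, 0, by simp [hα, hβ]⟩⟩
    · exact ⟨.n13 ε, iso2_cA04_triTable_iff.2 ⟨α, hα, 0, by simp [hβ]⟩⟩
  · exact ⟨.n12 (α / β), iso2_cA04_triTable_iff.2 ⟨β, hβ, ε * β, by field_simp; simp⟩⟩

theorem exists_iso2_np {N : Type*} [AddCommGroup N] [Module ℂ N]
    (hdim : Module.finrank ℂ N = 2) {mul circ : N →ₗ[ℂ] N →ₗ[ℂ] N}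
    (hcomm : ∀ x y, mul x y = mul y x) (hassoc : ∀ x y z, mul (mul x y) z = mul x (mul y z))
    (h : IsPoissonCompatible (fun x y => mul x y) fun x y => circ x y)
    (hne : ∃ x y, mul x y ≠ 0) :
    ∃ i, Iso2 (fun x y => mul x y) (fun x y => circ x y) (tm (npMul i)) (tm (npCirc i)) := by
  obtain ⟨c, hc, hiso⟩ := exists_iso1_npMul hdim hcomm hassoc hne
  obtain ⟨d, hiso⟩ := hiso.exists_iso2_tm circ
  suffices ∃ i, Iso2 (tm c) (tm d) (tm (npMul i)) (tm (npCirc i)) from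
    this.imp fun _ => hiso.trans
  have hcd := h.of_iso2 hiso
  rcases hc with rfl | rfl | rfl | rfl
  · rw [hcd.eq_diagTable_of_cA01]
    exact exists_iso2_np_of_cA01 _ _
  · rw [hcd.eq_triTable_of_cA02]
    exact exists_iso2_np_of_cA02 _ _ _
  · rw [hcd.eq_diagTable_of_cA03]
    exact exists_iso2_np_of_cA03 _ _
  · rw [hcd.eq_triTable_of_cA04]
    exact exists_iso2_np_of_cA04 _ _ _

theorem npIdx_eq_or_swap_of_iso2 {i j : NPIdx}
    (h : Iso2 (tm (npMul i)) (tm (npCirc i)) (tm (npMul j)) (tm (npCirc j))) :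
    i = j ∨ ∃ α β : ℂ, i = .n07 α β ∧ j = .n07 β α := by
  have hmul := npMul_eq_of_iso1 h.iso1_left
  cases i <;> cases j <;>
    simp [npMul, cA01, cA02, cA03, cA04, tbl, funext_iff, Fin.forall_fin_two] at hmul
  all_goals
    simp only [npMul, npCirc_eq, iso2_cA01_diagTable_iff, iso2_cA02_triTable_iff,
      iso2_cA03_diagTable_iff, iso2_cA04_triTable_iff] at h
    grind

end NovikovPoissonClassification

/-- Every nonzero 2-dimensional Novikov–Poisson algebra over ℂ is
isomorphic to one of the Novikov algebras N01–N06^γ (with `· ≡ 0`) or to one of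
N07–N14; moreover the only nontrivial isomorphism among N07–N14 is
`N07^{α,β} ≅ N07^{β,α}`. -/
theorem statement10 (N : Type*) [AddCommGroup N] [Module ℂ N]
    (hdim : Module.finrank ℂ N = 2)
    (mul circ : N →ₗ[ℂ] N →ₗ[ℂ] N)
    (hcomm : ∀ x y : N, mul x y = mul y x)
    (hassoc : ∀ x y z : N, mul (mul x y) z = mul x (mul y z))
    (hnov₁ : ∀ x y z : N, circ (circ x y) z - circ x (circ y z) =
      circ (circ y x) z - circ y (circ x z))
    (hnov₂ : ∀ x y z : N, circ (circ x y) z = circ (circ x z) y)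
    (hcompat₁ : ∀ x y z : N, circ (mul x y) z = mul x (circ y z))
    (hcompat₂ : ∀ x y z : N, mul (circ x y) z - mul (circ y x) z =
      circ x (mul y z) - circ y (mul x z))
    (hnz : (∃ x y : N, mul x y ≠ 0) ∨ (∃ x y : N, circ x y ≠ 0)) :
    ((∃ i : Fin 5 ⊕ ℂ, Iso2 (fun x y => mul x y) (fun x y => circ x y)
        zm (tm (novAlg i))) ∨
     (∃ i : NPIdx, Iso2 (fun x y => mul x y) (fun x y => circ x y)
        (tm (npMul i)) (tm (npCirc i)))) ∧
    (∀ α β : ℂ, Iso2 (tm (npMul (.n07 α β))) (tm (npCirc (.n07 α β)))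
        (tm (npMul (.n07 β α))) (tm (npCirc (.n07 β α)))) ∧
    (∀ i j : NPIdx, Iso2 (tm (npMul i)) (tm (npCirc i)) (tm (npMul j)) (tm (npCirc j)) →
        i = j ∨ ∃ α β : ℂ, i = .n07 α β ∧ j = .n07 β α) := by
  refine ⟨?_, fun α β => iso2_cA01_diagTable_iff.2 (.inr ⟨rfl, rfl⟩), fun i j =>
    npIdx_eq_or_swap_of_iso2⟩
  by_cases hmul : ∃ x y, mul x y ≠ 0
  · exact .inr (exists_iso2_np hdim hcomm hassoc ⟨hcompat₁, hcompat₂⟩ hmul)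
  · obtain ⟨i, φ, hφ⟩ :=
      IsNovikov.exists_iso1_novAlg hdim ⟨hnov₁, hnov₂⟩ (hnz.resolve_left hmul)
    push Not at hmul
    exact .inl ⟨i, φ, fun x y => by simp [hmul, zm], hφ⟩
end
end

section
/- Every nonzero 2-dimensional pre-Lie Poisson algebra (P, ·, ∘) over ℂ is isomorphic either to one of the 2-dimensional Novikov–Poisson algebras on a basis e1, e2 (all unlisted products of basis elements, other than those forced by commutativity of ·, are zero), namely: with · ≡ 0: N01: e1∘e1 = e2; N02: e2∘e1 = −e1; N03: e1∘e1 = e1, e2∘e2 = e2; N04: e1∘e1 = e1; N05: e1∘e2 = e1, e2∘e2 = e1 + e2; N06^γ: e1∘e2 = e1, e2∘e1 = γ·e1, e2∘e2 = e2; and (α, β ∈ ℂ): N07^{α,β}: e1·e1 = e1, e2·e2 = e2, e1∘e1 = α·e1, e2∘e2 = β·e2; N08^{α,β}: e1·e1 = e1, e1·e2 = e2, e1∘e1 = α·e1 + e2, e1∘e2 = β·e2, e2∘e1 = α·e2; N09^{α,β}: e1·e1 = e1, e1·e2 = e2, e1∘e1 = α·e1, e1∘e2 = β·e2, e2∘e1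 = α·e2; N10^α: e1·e1 = e1, e1∘e1 = α·e1, e2∘e2 = e2; N11^α: e1·e1 = e1, e1∘e1 = α·e1; N12^α: e1·e1 = e2, e1∘e1 = α·e1, e1∘e2 = e2, e2∘e1 = α·e2; N13^α: e1·e1 = e2, e1∘e1 = e1 + α·e2, e2∘e1 = e2; N14^α: e1·e1 = e2, e1∘e1 = α·e2; or to one of the following algebras with · ≡ 0: P01^α (α ∈ ℂ, α ≠ 0): e2∘e1 = −e1, e2∘e2 = α·e2; P02: e1∘e1 = e2, e2∘e1 = −e1, e2∘e2 = −2·e2; P03: e2∘e1 = −e1, e2∘e2 = e1 − e2. -/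
noncomputable section

/-!
If `·` is nonzero, choose a basis `u`, `v` putting it in one of the forms A01–A04. The identity
`(x · y) ∘ z = x · (y ∘ z)` says that every right multiplication of `∘` is `·`-linear; together
with the other compatibility axiom it leaves only two shapes for `∘`, one when `u` and `v` are
orthogonal and `u` is idempotent (A01, A03), the other when `v` is a nilpotent multiple of `u`
(A02, A04). Rescaling then gives N07–N14.

If `·` is zero and `∘` is commutative, then `∘` is associative, hence again one of A01–A04.
Otherwise some basis satisfies `u ∘ v - v ∘ u = u`. The pre-Lie identity says that `x ↦ L x`,
`L x y = x ∘ y`, is a representation of the commutator Lie algebra, so `[L u, L v] = L u` and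
`L u` is nilpotent. If `u ∘ u ≠ 0` this forces P02; if `u ∘ u = 0` it leaves a short list of tables,
in which `v ∘ v` is diagonalised by a shear unless a resonance occurs (P03 and N05).
-/

open Module

section StructureConstants

variable {R ι M : Type*} [CommSemiring R] [Fintype ι] [AddCommMonoid M] [Module R M]

/-- The bilinear multiplication `μ` has structure constants `c` with respect to the family `e`:
`c i j` lists the coefficients of `μ (e i) (e j)`. -/
def HasStructureConstants (μ : M →ₗ[R] M →ₗ[R] M) (e : ι → M) (c : ι → ι → ι → R) : Prop :=
  ∀ i j, μ (e i) (e j) = ∑ k, c i j k • e k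

theorem HasStructureConstants.equivFun_apply {μ : M →ₗ[R] M →ₗ[R] M} {b : Basis ι R M}
    {c : ι → ι → ι → R} (h : HasStructureConstants μ b c) (x y : M) :
    b.equivFun (μ x y) = ∑ i, ∑ j, (b.equivFun x i * b.equivFun y j) • c i j := by
  have hc (i j) : b.equivFun (μ (b i) (b j)) = c i j := by
    rw [h i j, ← b.equivFun_symm_apply, b.equivFun.apply_symm_apply]
  conv_lhs => rw [← b.sum_equivFun x, ← b.sum_equivFun y]
  simp only [map_sum, LinearMap.sum_apply, map_smul, LinearMap.smul_apply, hc, Finset.smul_sum,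
    smul_smul]
  rw [Finset.sum_comm]
  simp only [mul_comm]

end StructureConstants

section IsoOfStructureConstants

variable {P : Type*} [AddCommGroup P] [Module ℂ P] {μ ν : P →ₗ[ℂ] P →ₗ[ℂ] P}

theorem HasStructureConstants.iso2 (hdim : finrank ℂ P = 2) {e : Fin 2 → P}
    (he : LinearIndependent ℂ e) {c d : Fin 2 → Fin 2 → V2} (hμ : HasStructureConstants μ e c)
    (hν : HasStructureConstants ν e d) :
    Iso2 (fun x y => μ x y) (fun x y => ν x y) (tm c) (tm d) := by
  let b := basisOfLinearIndependentOfCardEqFinrank he (by simp [hdim])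
  have hb : ⇑b = e := coe_basisOfLinearIndependentOfCardEqFinrank he _
  rw [← hb] at hμ hν
  exact ⟨b.equivFun, hμ.equivFun_apply, hν.equivFun_apply⟩

theorem hasStructureConstants_tbl {u v : P} {a b c d : V2} :
    HasStructureConstants μ ![u, v] (tbl a b c d) ↔
      μ u u = a 0 • u + a 1 • v ∧ μ u v = b 0 • u + b 1 • v ∧
        μ v u = c 0 • u + c 1 • v ∧ μ v v = d 0 • u + d 1 • v := by
  simp [HasStructureConstants, Fin.forall_fin_two, Fin.sum_univ_two, tbl, and_assoc]

theorem iso1_tbl (hdim : finrank ℂ P = 2) {u v : P} (h : LinearIndependent ℂ ![u, v])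
    {a b c d : V2} (huu : ν u u = a 0 • u + a 1 • v) (huv : ν u v = b 0 • u + b 1 • v)
    (hvu : ν v u = c 0 • u + c 1 • v) (hvv : ν v v = d 0 • u + d 1 • v) :
    Iso1 (fun x y => ν x y) (tm (tbl a b c d)) := by
  have hν := hasStructureConstants_tbl.2 ⟨huu, huv, hvu, hvv⟩
  obtain ⟨φ, hφ, -⟩ := hν.iso2 hdim h hν
  exact ⟨φ, hφ⟩

theorem iso2_zm_of_iso1 {c : Fin 2 → Fin 2 → V2} (h : Iso1 (fun x y => ν x y) (tm c)) :
    Iso2 (fun x y => (0 : P →ₗ[ℂ] P →ₗ[ℂ] P) x y) (fun x y => ν x y) zm (tm c) := by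
  obtain ⟨φ, hφ⟩ := h
  exact ⟨φ, fun _ _ => map_zero φ, hφ⟩

end IsoOfStructureConstants

/-- Pre-Lie (left-symmetric) multiplications: the associator is symmetric in its first two
arguments. -/
def IsPreLie {R M : Type*} [CommRing R] [AddCommGroup M] [Module R M]
    (ν : M →ₗ[R] M →ₗ[R] M) : Prop :=
  ∀ x y z, ν (ν x y) z - ν (ν y x) z = ν x (ν y z) - ν y (ν x z)

/-- The two axioms relating the associative multiplication `μ` and the pre-Lie multiplication `ν`
of a pre-Lie Poisson algebra. -/
structure IsPoissonCompatible_s12 {R M : Type*} [CommRing R] [AddCommGroup M] [Module R M]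
    (μ ν : M →ₗ[R] M →ₗ[R] M) : Prop where
  mul_commutator : ∀ x y z, μ (ν x y) z - μ (ν y x) z = ν x (μ y z) - ν y (μ x z)
  circ_mul : ∀ x y z, ν (μ x y) z = μ x (ν y z)

section FieldLemmas

variable {K P : Type*} [Field K] [AddCommGroup P] [Module K P] {μ ν : P →ₗ[K] P →ₗ[K] P}
  {e u v w : P}

theorem exists_eq_smul_add_smul (hdim : finrank K P = 2) (h : LinearIndependent K ![u, v])
    (x : P) : ∃ a b : K, x = a • u + b • v := by
  have hx : x ∈ Submodule.span K (Set.range ![u, v]) := by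
    rw [h.span_eq_top_of_card_eq_finrank (by simp [hdim])]
    exact Submodule.mem_top
  rw [Matrix.range_cons_cons_empty, Submodule.mem_span_pair] at hx
  obtain ⟨a, b, hab⟩ := hx
  exact ⟨a, b, hab.symm⟩

theorem linearIndependent_pair_smul_right (h : LinearIndependent K ![u, v]) {r : K} (hr : r ≠ 0) :
    LinearIndependent K ![u, r • v] := by
  simpa using (LinearIndependent.pair_smul_smul_iff isUnit_one hr.isUnit).2 h

theorem exists_mul_self_ne_zero [NeZero (2 : K)] (hcomm : ∀ x y, μ x y = μ y x) (hμ : μ ≠ 0) :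
    ∃ x, μ x x ≠ 0 := by
  by_contra! halt
  refine hμ (LinearMap.ext₂ fun x y => ?_)
  have hneg : -μ x y = μ x y := (LinearMap.IsAlt.neg halt x y).trans (hcomm y x)
  have htwo : (2 : K) • μ x y = 0 := by
    rw [two_smul]
    nth_rw 1 [← hneg]
    exact neg_add_cancel _
  exact (smul_eq_zero_iff_right two_ne_zero).1 htwo

theorem exists_idempotent_or_mul_mul_self_eq_zero (hdim : finrank K P = 2)
    (hassoc : ∀ x y z, μ (μ x y) z = μ x (μ y z)) {x : P} (hx : μ x x ≠ 0) :
    (∃ e, e ≠ 0 ∧ μ e e = e) ∨ LinearIndependent K ![x, μ x x] ∧ μ x (μ x x) = 0 := by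
  have hx₀ : x ≠ 0 := by
    rintro rfl
    simp at hx
  by_cases h : LinearIndependent K ![x, μ x x]
  · obtain ⟨a, b, hcube⟩ := exists_eq_smul_add_smul hdim h (μ x (μ x x))
    by_cases ha : a = 0
    · by_cases hb : b = 0
      · exact Or.inr ⟨h, by simp [hcube, ha, hb]⟩
      · -- From `x³ = b x²` we get `(x²)² = b² x²`.
        have hfourth : μ (μ x x) (μ x x) = b ^ 2 • μ x x := by
          simp [hassoc, hcube, ha, smul_smul, pow_two]
        exact Or.inl ⟨(b ^ 2)⁻¹ • μ x x, by simp [hb, hx], by simp [hfourth, hb]⟩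
    · -- `e` is a unit of the algebra generated by `x`, since `a x = x³ - b x²`.
      let e := a⁻¹ • (μ x x - b • x)
      have hxe : μ x e = x := by simp [e, hcube, smul_smul, ha]
      have he₀ : e ≠ 0 := fun he => hx₀ (by rw [← hxe, he, map_zero])
      have hxxe : μ (μ x x) e = μ x x := by rw [hassoc, hxe]
      have hee : μ e e = e := by
        calc μ e e = a⁻¹ • (μ (μ x x) e - b • μ x e) := by
              rw [← LinearMap.smul_apply, ← LinearMap.sub_apply, ← LinearMap.smul_apply,
                ← map_smul, ← map_sub, ← map_smul]
          _ = e := by rw [hxxe, hxe]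
      exact Or.inl ⟨e, he₀, hee⟩
  · obtain ⟨c, hc⟩ : ∃ c : K, c • x = μ x x := by
      simpa [LinearIndependent.pair_iff' hx₀] using h
    have hc₀ : c ≠ 0 := by
      rintro rfl
      simp [← hc] at hx
    exact Or.inl ⟨c⁻¹ • x, by simp [hc₀, hx₀], by simp [← hc, smul_smul, hc₀]⟩

theorem exists_mul_eq_zero_or_forall_mul_eq_of_idempotent
    (hassoc : ∀ x y z, μ (μ x y) z = μ x (μ y z)) (he₀ : e ≠ 0) (he : μ e e = e) :
    (∃ w, LinearIndependent K ![e, w] ∧ μ e w = 0) ∨ ∀ x, μ e x = x := by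
  refine or_iff_not_imp_right.2 fun hunit => ?_
  push Not at hunit
  obtain ⟨x, hx⟩ := hunit
  have hw : μ e (x - μ e x) = 0 := by simp [← hassoc, he]
  refine ⟨x - μ e x, (LinearIndependent.pair_iff' he₀).2 fun c hc => ?_, hw⟩
  have hce : c • e = 0 := by rwa [← hc, map_smul, he] at hw
  exact hx (sub_eq_zero.1 (hc.symm.trans hce)).symm

theorem exists_mul_self_eq_smul_of_mul_eq_zero (hdim : finrank K P = 2)
    (hassoc : ∀ x y z, μ (μ x y) z = μ x (μ y z)) (h : LinearIndependent K ![e, w])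
    (he : μ e e = e) (hew : μ e w = 0) : ∃ t : K, μ w w = t • w := by
  obtain ⟨s, t, hww⟩ := exists_eq_smul_add_smul hdim h (μ w w)
  have hs : s • e = 0 := by
    calc s • e = μ e (μ w w) := by simp [hww, he, hew]
      _ = 0 := by rw [← hassoc, hew, map_zero, LinearMap.zero_apply]
  exact ⟨t, by rw [hww, hs, zero_add]⟩

theorem exists_linearIndependent_mul_self_eq_smul_of_unit [NeZero (2 : K)]
    (hdim : finrank K P = 2) (hcomm : ∀ x y, μ x y = μ y x) (he₀ : e ≠ 0)
    (he : ∀ x, μ e x = x) :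
    ∃ n, LinearIndependent K ![e, n] ∧ ∃ d : K, μ n n = d • e := by
  obtain ⟨w, h⟩ := exists_linearIndependent_pair_of_one_lt_finrank (R := K) (by omega) he₀
  obtain ⟨s, t, hww⟩ := exists_eq_smul_add_smul hdim h (μ w w)
  have hwe : μ w e = w := by rw [hcomm, he]
  have htwo : (2 : K) ≠ 0 := two_ne_zero
  -- Completing the square in `w² = s e + t w`.
  refine ⟨(-(t / 2)) • e + w, (LinearIndependent.pair_add_smul_right_iff _).2 h,
    s + (t / 2) ^ 2, ?_⟩
  simp only [map_add, map_smul, LinearMap.add_apply, LinearMap.smul_apply, he, hwe, hww]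
  match_scalars <;> field_simp <;> ring

theorem IsPoissonCompatible_s12.exists_circ_eq_of_orthogonal (hμν : IsPoissonCompatible_s12 μ ν)
    (hdim : finrank K P = 2) (h : LinearIndependent K ![u, v]) (huu : μ u u = u)
    (huv : μ u v = 0) (hvu : μ v u = 0) :
    ∃ α β : K, ν u u = α • u ∧ ν u v = 0 ∧ ν v u = 0 ∧ ν v v = β • v := by
  have circ_left_u (x) : ∃ a : K, ν u x = a • u := by
    obtain ⟨a, b, hx⟩ := exists_eq_smul_add_smul hdim h (ν u x)
    exact ⟨a, by rw [← huu, hμν.circ_mul, hx, map_add, map_smul, map_smul, huu, huv]; simp⟩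
  have circ_left_v (x) : ∃ b : K, ν v x = b • v := by
    obtain ⟨a, b, hx⟩ := exists_eq_smul_add_smul hdim h (ν v x)
    have hau : a • u = 0 := by
      calc a • u = μ u (ν v x) := by simp [hx, huu, huv]
        _ = 0 := by rw [← hμν.circ_mul, huv, map_zero, LinearMap.zero_apply]
    exact ⟨b, by rw [hx, hau, zero_add]⟩
  obtain ⟨α, hα⟩ := circ_left_u u
  obtain ⟨a, ha⟩ := circ_left_u v
  obtain ⟨b, hb⟩ := circ_left_v u
  obtain ⟨β, hβ⟩ := circ_left_v v
  have hab : a • u = b • (-v) := by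
    simpa [ha, hb, huu, hvu] using hμν.mul_commutator u v u
  obtain ⟨rfl, rfl⟩ := (LinearIndependent.pair_neg_right_iff.2 h).eq_zero_of_pair' hab
  exact ⟨α, β, hα, by simpa using ha, by simpa using hb, hβ⟩

theorem IsPoissonCompatible_s12.exists_circ_eq_of_mul_eq [NeZero (2 : K)]
    (hμν : IsPoissonCompatible_s12 μ ν) (hdim : finrank K P = 2) (hcomm : ∀ x y, μ x y = μ y x)
    (h : LinearIndependent K ![u, v]) (hwu : μ w u = v) (hwv : μ w v = 0) :
    ∃ α κ β : K, ν u u = α • u + κ • v ∧ ν u v = β • v ∧ ν v u = α • v ∧ ν v v = 0 := by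
  have circ_left_v (x) : ν v x = μ w (ν u x) := by rw [← hwu, hμν.circ_mul]
  obtain ⟨α, κ, huu⟩ := exists_eq_smul_add_smul hdim h (ν u u)
  obtain ⟨b, β, huv⟩ := exists_eq_smul_add_smul hdim h (ν u v)
  have hvu : ν v u = α • v := by simp [circ_left_v, huu, hwu, hwv]
  have hvv : ν v v = b • v := by simp [circ_left_v, huv, hwu, hwv]
  have hb : (2 * b) • v = 0 := by
    have hneg : b • v = -(b • v) := by
      simpa [huv, hvu, hvv, hcomm _ w, hwu, hwv] using hμν.mul_commutator u v w
    rw [mul_smul, two_smul]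
    nth_rw 1 [hneg]
    exact neg_add_cancel _
  obtain rfl : b = 0 := by
    simpa [two_ne_zero, show v ≠ 0 from h.ne_zero 1] using hb
  exact ⟨α, κ, β, huu, by simpa using huv, hvu, by simpa using hvv⟩

theorem exists_linearIndependent_commutator_eq (hdim : finrank K P = 2)
    (hne : ∃ x y, ν x y ≠ ν y x) :
    ∃ u v, LinearIndependent K ![u, v] ∧ ν u v - ν v u = u := by
  obtain ⟨x, y, hxy⟩ := hne
  let u := ν x y - ν y x
  have hu : u ≠ 0 := sub_ne_zero.2 hxy
  obtain ⟨w, h⟩ := exists_linearIndependent_pair_of_one_lt_finrank (R := K) (by omega) hu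
  obtain ⟨a, b, hx⟩ := exists_eq_smul_add_smul hdim h x
  obtain ⟨c, d, hy⟩ := exists_eq_smul_add_smul hdim h y
  have hdet : (a * d - b * c) • (ν u w - ν w u) = u := by
    conv_rhs => simp only [u]
    rw [hx, hy]
    simp only [map_add, map_smul, LinearMap.add_apply, LinearMap.smul_apply]
    module
  have hdet₀ : a * d - b * c ≠ 0 := fun hz => hu (by rw [← hdet, hz, zero_smul])
  exact ⟨u, (a * d - b * c) • w, linearIndependent_pair_smul_right h hdet₀,
    by simpa [smul_sub] using hdet⟩

theorem isNilpotent_of_commutator_eq_self [CharZero K] [FiniteDimensional K P] {f g : End K P}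
    (hfg : f * g - g * f = f) : IsNilpotent f := by
  have hpow (n : ℕ) : f ^ n * g - g * f ^ n = (n : K) • f ^ n := by
    induction n with
    | zero => simp
    | succ n ih =>
      calc f ^ (n + 1) * g - g * f ^ (n + 1)
          = f ^ n * (f * g - g * f) + (f ^ n * g - g * f ^ n) * f := by rw [pow_succ]; noncomm_ring
        _ = ((n + 1 : ℕ) : K) • f ^ (n + 1) := by
          rw [hfg, ih, pow_succ, smul_mul_assoc]
          push_cast
          module
  -- Otherwise every `n : ℕ` is an eigenvalue of `X ↦ X * g - g * X`, with eigenvector `f ^ n`.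
  by_contra hf
  let T : End K (End K P) := LinearMap.mulRight K g - LinearMap.mulLeft K g
  have heig (n : ℕ) : T.HasEigenvalue (n : K) :=
    End.hasEigenvalue_of_hasEigenvector (x := f ^ n)
      ⟨End.mem_eigenspace_iff.2 (hpow n), fun hn => hf ⟨n, hn⟩⟩
  exact Set.infinite_range_of_injective (Nat.cast_injective (R := K))
    (T.finite_hasEigenvalue.subset (Set.range_subset_iff.2 heig))

theorem IsPreLie.circ_circ_eq_zero_of_commutator_eq [CharZero K] (hν : IsPreLie ν)
    (hdim : finrank K P = 2) (huv : ν u v - ν v u = u) (x : P) : ν u (ν u x) = 0 := by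
  have : FiniteDimensional K P := .of_finrank_pos (by omega)
  let L (y : P) : End K P := ν y
  have hL : L u * L v - L v * L u = L u := LinearMap.ext fun z => by
    calc ν u (ν v z) - ν v (ν u z) = ν (ν u v - ν v u) z := by
          rw [← hν, map_sub, LinearMap.sub_apply]
      _ = ν u z := by rw [huv]
  obtain ⟨n, hn⟩ := isNilpotent_of_commutator_eq_self hL
  have hker := End.ker_pow_le_ker_pow_finrank (L u) n (x := x) (by simp [hn])
  simpa [hdim, pow_two, L] using hker

theorem IsPreLie.exists_normalForm_of_circ_self_ne_zero [CharZero K] (hν : IsPreLie ν)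
    (hdim : finrank K P = 2) (h : LinearIndependent K ![u, v]) (huv : ν u v - ν v u = u)
    (huu : ν u u ≠ 0) :
    ∃ (a : K) (w : P), a ≠ 0 ∧ LinearIndependent K ![u, w] ∧
      ν u u = a • w ∧ ν u w = 0 ∧ ν w u = -u ∧ ν w w = (-2 : K) • w := by
  have hnil := hν.circ_circ_eq_zero_of_commutator_eq hdim huv
  obtain ⟨p, a, hpa⟩ := exists_eq_smul_add_smul hdim h (ν u u)
  have ha : a ≠ 0 := by
    rintro rfl
    have hp : p • ν u u = 0 := by
      calc p • ν u u = ν u (ν u u) := by rw [hpa]; simp [hpa]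
        _ = 0 := hnil u
    exact huu (by rw [hpa, (smul_eq_zero_iff_left huu).1 hp]; simp)
  let w := (a⁻¹ * p) • u + v
  have haw : ν u u = a • w := by simp [w, hpa, smul_smul, ha]
  have huw : ν u w = 0 := by
    have := hnil u
    rwa [haw, map_smul, smul_eq_zero_iff_right ha] at this
  have hwu : ν w u = -u := by
    have hcomm : ν u w - ν w u = u := by simpa [w] using huv
    rw [huw, zero_sub] at hcomm
    exact neg_eq_iff_eq_neg.1 hcomm
  have hww : ν w w = (-2 : K) • w := by
    have hauw : a • w = -(a • w) - a • ν w w := by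
      simpa [huw, hwu, haw] using hν u w u
    refine (smul_right_inj ha).1 ?_
    linear_combination (norm := module) hauw
  exact ⟨a, w, ha, (LinearIndependent.pair_add_smul_right_iff _).2 h, haw, huw, hwu, hww⟩

theorem IsPreLie.exists_normalForm_of_circ_self_eq_zero [CharZero K] (hν : IsPreLie ν)
    (hdim : finrank K P = 2) (h : LinearIndependent K ![u, v]) (huv : ν u v - ν v u = u)
    (huu : ν u u = 0) :
    ∃ p r d : K, ν u v = p • u ∧ ν v u = (p - 1) • u ∧ ν v v = r • u + d • v ∧
      (p = 0 ∨ p = d) := by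
  obtain ⟨p, q, hpq⟩ := exists_eq_smul_add_smul hdim h (ν u v)
  obtain ⟨r, d, hvv⟩ := exists_eq_smul_add_smul hdim h (ν v v)
  have hq : q = 0 := by
    have hzero : (q * p) • u + (q * q) • v = 0 := by
      calc (q * p) • u + (q * q) • v = ν u (ν u v) := by
            simp [hpq, huu, smul_smul]
        _ = 0 := hν.circ_circ_eq_zero_of_commutator_eq hdim huv v
    exact mul_self_eq_zero.1 (h.eq_zero_of_pair hzero).2
  have hpu : ν u v = p • u := by simp [hpq, hq]
  have hvu : ν v u = (p - 1) • u := by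
    rw [sub_smul, one_smul, ← hpu]
    nth_rw 3 [← huv]
    abel
  have hrel : (p * (p - d)) • u = 0 := by
    have := hν u v v
    simp only [hpu, hvu, hvv, map_add, map_smul, LinearMap.smul_apply, huu] at this
    linear_combination (norm := module) this
  have hp : p = 0 ∨ p = d := by
    simpa [show u ≠ 0 from h.ne_zero 0, sub_eq_zero] using hrel
  exact ⟨p, r, d, hpu, hvu, hvv, hp⟩

/-- The shear `v ↦ t u + v` changes the coefficient `r` by `t (p + c - d)`, so it removes it unless
`d = p + c`; in that resonant case `r` can only be rescaled to `1`. -/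
theorem exists_circ_self_eq_smul_or_resonant {p c r d : K} (h : LinearIndependent K ![u, v])
    (huu : ν u u = 0) (huv : ν u v = p • u) (hvu : ν v u = c • u)
    (hvv : ν v v = r • u + d • v) :
    ∃ u' v', LinearIndependent K ![u', v'] ∧ ν u' u' = 0 ∧ ν u' v' = p • u' ∧ ν v' u' = c • u' ∧
      (ν v' v' = d • v' ∨ d = p + c ∧ ν v' v' = u' + d • v') := by
  by_cases hd : d = p + c
  · by_cases hr : r = 0
    · exact ⟨u, v, h, huu, huv, hvu, Or.inl (by simp [hvv, hr])⟩
    · refine ⟨r • u, v, ?_, ?_, ?_, ?_, Or.inr ⟨hd, hvv⟩⟩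
      · simpa using (LinearIndependent.pair_smul_smul_iff (Ne.isUnit hr) isUnit_one).2 h
      · simp [huu]
      · simp [huv, smul_comm r]
      · simp [hvu, smul_comm r]
  · have hd' : d - (p + c) ≠ 0 := sub_ne_zero.2 hd
    refine ⟨u, (r / (d - (p + c))) • u + v, (LinearIndependent.pair_add_smul_right_iff _).2 h, huu,
      ?_, ?_, Or.inl ?_⟩
    · simp [huu, huv]
    · simp [huu, hvu]
    · simp only [map_add, map_smul, LinearMap.add_apply, LinearMap.smul_apply, huu, huv, hvu, hvv]
      match_scalars <;> field_simp
      ring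

end FieldLemmas

section ComplexClassification

variable {P : Type*} [AddCommGroup P] [Module ℂ P] {μ ν : P →ₗ[ℂ] P →ₗ[ℂ] P} {u v w e : P}

theorem exists_hasStructureConstants_cA01_or_cA03 (hdim : finrank ℂ P = 2)
    (hcomm : ∀ x y, μ x y = μ y x) (hassoc : ∀ x y z, μ (μ x y) z = μ x (μ y z))
    (h : LinearIndependent ℂ ![e, w]) (he : μ e e = e) (hew : μ e w = 0) :
    ∃ u v, LinearIndependent ℂ ![u, v] ∧
      (HasStructureConstants μ ![u, v] cA01 ∨ HasStructureConstants μ ![u, v] cA03) := by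
  obtain ⟨t, hww⟩ := exists_mul_self_eq_smul_of_mul_eq_zero hdim hassoc h he hew
  by_cases ht : t = 0
  · refine ⟨e, w, h, Or.inr (hasStructureConstants_tbl.2 ?_)⟩
    simp [he, hew, hcomm w e, hww, ht]
  · refine ⟨e, t⁻¹ • w, linearIndependent_pair_smul_right h (inv_ne_zero ht),
      Or.inl (hasStructureConstants_tbl.2 ?_)⟩
    simp [he, hew, hcomm w e, hww, ht]

theorem exists_hasStructureConstants_cA01_or_cA02 (hdim : finrank ℂ P = 2)
    (hcomm : ∀ x y, μ x y = μ y x) (he₀ : e ≠ 0) (he : ∀ x, μ e x = x) :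
    ∃ u v, LinearIndependent ℂ ![u, v] ∧
      (HasStructureConstants μ ![u, v] cA01 ∨ HasStructureConstants μ ![u, v] cA02) := by
  obtain ⟨n, h, d, hnn⟩ := exists_linearIndependent_mul_self_eq_smul_of_unit hdim hcomm he₀ he
  have hne : μ n e = n := by rw [hcomm, he]
  by_cases hd : d = 0
  · refine ⟨e, n, h, Or.inr (hasStructureConstants_tbl.2 ?_)⟩
    simp [he, hne, hnn, hd]
  · obtain ⟨k, rfl⟩ := IsAlgClosed.exists_eq_mul_self d
    have hk : k ≠ 0 := left_ne_zero_of_mul hd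
    -- `m = n / k` squares to `e`, so `(e ± m) / 2` are orthogonal idempotents.
    refine ⟨(1 / 2 : ℂ) • e + (1 / (2 * k)) • n, (1 / 2 : ℂ) • e + (-(1 / (2 * k))) • n,
      LinearIndependent.pair_add_smul_add_smul_iff _ _ _ _ |>.2 ⟨h, ?_⟩,
      Or.inl (hasStructureConstants_tbl.2 ⟨?_, ?_, ?_, ?_⟩)⟩
    · intro hdet
      field_simp at hdet
      norm_num at hdet
    all_goals
      simp only [map_add, map_smul, LinearMap.add_apply, LinearMap.smul_apply, he, hne, hnn,
        Matrix.cons_val_zero, Matrix.cons_val_one, Pi.zero_apply]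
      match_scalars <;> field_simp <;> ring

theorem exists_hasStructureConstants_of_comm_assoc (hdim : finrank ℂ P = 2)
    (hcomm : ∀ x y, μ x y = μ y x) (hassoc : ∀ x y z, μ (μ x y) z = μ x (μ y z)) (hμ : μ ≠ 0) :
    ∃ u v, LinearIndependent ℂ ![u, v] ∧
      (HasStructureConstants μ ![u, v] cA01 ∨ HasStructureConstants μ ![u, v] cA02 ∨
        HasStructureConstants μ ![u, v] cA03 ∨ HasStructureConstants μ ![u, v] cA04) := by
  obtain ⟨x, hx⟩ := exists_mul_self_ne_zero hcomm hμ
  obtain ⟨e, he₀, he⟩ | ⟨h, hcube⟩ :=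
    exists_idempotent_or_mul_mul_self_eq_zero hdim hassoc hx
  · obtain ⟨w, h, hew⟩ | hunit :=
      exists_mul_eq_zero_or_forall_mul_eq_of_idempotent hassoc he₀ he
    · obtain ⟨u, v, h, hμ⟩ :=
        exists_hasStructureConstants_cA01_or_cA03 hdim hcomm hassoc h he hew
      exact ⟨u, v, h, by tauto⟩
    · obtain ⟨u, v, h, hμ⟩ := exists_hasStructureConstants_cA01_or_cA02 hdim hcomm he₀ hunit
      exact ⟨u, v, h, by tauto⟩
  · refine ⟨x, μ x x, h, Or.inr (Or.inr (Or.inr (hasStructureConstants_tbl.2 ?_)))⟩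
    simp [hcube, hcomm (μ x x) x, hassoc x x (μ x x)]

theorem IsPoissonCompatible_s12.exists_iso2_of_cA01 (hμν : IsPoissonCompatible_s12 μ ν)
    (hdim : finrank ℂ P = 2) (h : LinearIndependent ℂ ![u, v])
    (hμ : HasStructureConstants μ ![u, v] cA01) :
    ∃ i, Iso2 (fun x y => μ x y) (fun x y => ν x y) (tm (npMul i)) (tm (npCirc i)) := by
  obtain ⟨huu, huv, hvu, -⟩ : μ u u = u ∧ μ u v = 0 ∧ μ v u = 0 ∧ μ v v = v := by
    simpa [cA01, hasStructureConstants_tbl] using hμ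
  obtain ⟨α, β, nuu, nuv, nvu, nvv⟩ := hμν.exists_circ_eq_of_orthogonal hdim h huu huv hvu
  refine ⟨.n07 α β, hμ.iso2 hdim h (hasStructureConstants_tbl.2 ?_)⟩
  simp [nuu, nuv, nvu, nvv]

theorem IsPoissonCompatible_s12.exists_iso2_of_cA02 (hμν : IsPoissonCompatible_s12 μ ν)
    (hdim : finrank ℂ P = 2) (hcomm : ∀ x y, μ x y = μ y x) (h : LinearIndependent ℂ ![u, v])
    (hμ : HasStructureConstants μ ![u, v] cA02) :
    ∃ i, Iso2 (fun x y => μ x y) (fun x y => ν x y) (tm (npMul i)) (tm (npCirc i)) := by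
  obtain ⟨huu, huv, hvu, hvv⟩ : μ u u = u ∧ μ u v = v ∧ μ v u = v ∧ μ v v = 0 := by
    simpa [cA02, hasStructureConstants_tbl] using hμ
  obtain ⟨α, κ, β, nuu, nuv, nvu, nvv⟩ := hμν.exists_circ_eq_of_mul_eq hdim hcomm h hvu hvv
  by_cases hκ : κ = 0
  · refine ⟨.n09 α β, hμ.iso2 hdim h (hasStructureConstants_tbl.2 ?_)⟩
    simp [nuu, nuv, nvu, nvv, hκ]
  · have h' : LinearIndependent ℂ ![u, κ • v] :=
      linearIndependent_pair_smul_right h hκ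
    refine ⟨.n08 α β, HasStructureConstants.iso2 hdim h' (hasStructureConstants_tbl.2 ?_)
      (hasStructureConstants_tbl.2 ?_)⟩
    · simp [huu, huv, hvu, hvv]
    · simp [nuu, nuv, nvu, nvv, smul_comm κ]

theorem IsPoissonCompatible_s12.exists_iso2_of_cA03 (hμν : IsPoissonCompatible_s12 μ ν)
    (hdim : finrank ℂ P = 2) (h : LinearIndependent ℂ ![u, v])
    (hμ : HasStructureConstants μ ![u, v] cA03) :
    ∃ i, Iso2 (fun x y => μ x y) (fun x y => ν x y) (tm (npMul i)) (tm (npCirc i)) := by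
  obtain ⟨huu, huv, hvu, hvv⟩ : μ u u = u ∧ μ u v = 0 ∧ μ v u = 0 ∧ μ v v = 0 := by
    simpa [cA03, hasStructureConstants_tbl] using hμ
  obtain ⟨α, β, nuu, nuv, nvu, nvv⟩ := hμν.exists_circ_eq_of_orthogonal hdim h huu huv hvu
  by_cases hβ : β = 0
  · refine ⟨.n11 α, hμ.iso2 hdim h (hasStructureConstants_tbl.2 ?_)⟩
    simp [nuu, nuv, nvu, nvv, hβ]
  · have h' : LinearIndependent ℂ ![u, β⁻¹ • v] :=
      linearIndependent_pair_smul_right h (inv_ne_zero hβ)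
    refine ⟨.n10 α, HasStructureConstants.iso2 hdim h' (hasStructureConstants_tbl.2 ?_)
      (hasStructureConstants_tbl.2 ?_)⟩
    · simp [huu, huv, hvu, hvv]
    · simp [nuu, nuv, nvu, nvv, hβ]

theorem IsPoissonCompatible_s12.exists_iso2_of_cA04 (hμν : IsPoissonCompatible_s12 μ ν)
    (hdim : finrank ℂ P = 2) (hcomm : ∀ x y, μ x y = μ y x) (h : LinearIndependent ℂ ![u, v])
    (hμ : HasStructureConstants μ ![u, v] cA04) :
    ∃ i, Iso2 (fun x y => μ x y) (fun x y => ν x y) (tm (npMul i)) (tm (npCirc i)) := by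
  obtain ⟨huu, huv, hvu, hvv⟩ : μ u u = v ∧ μ u v = 0 ∧ μ v u = 0 ∧ μ v v = 0 := by
    simpa [cA04, hasStructureConstants_tbl] using hμ
  obtain ⟨α, κ, β, nuu, nuv, nvu, nvv⟩ := hμν.exists_circ_eq_of_mul_eq hdim hcomm h huu huv
  by_cases hβ : β = 0
  · by_cases hα : α = 0
    · refine ⟨.n14 κ, hμ.iso2 hdim h (hasStructureConstants_tbl.2 ?_)⟩
      simp [nuu, nuv, nvu, nvv, hα, hβ]
    · have h' : LinearIndependent ℂ ![α⁻¹ • u, (α⁻¹ * α⁻¹) • v] :=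
        (LinearIndependent.pair_smul_smul_iff (by simp [hα]) (by simp [hα])).2 h
      refine ⟨.n13 κ, HasStructureConstants.iso2 hdim h' (hasStructureConstants_tbl.2 ?_)
        (hasStructureConstants_tbl.2 ?_)⟩
      · simp [huu, huv, hvu, hvv, smul_smul]
      · simp [nuu, nuv, nvu, nvv, smul_smul, hα, hβ, mul_assoc, mul_comm κ]
  · -- The shear of `u` by `-(κ / β) • v` removes the `v`-component of `ν u u`.
    have h' : LinearIndependent ℂ ![β⁻¹ • u + (-(κ / β ^ 2)) • v, (0 : ℂ) • u + (β ^ 2)⁻¹ • v] :=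
      (LinearIndependent.pair_add_smul_add_smul_iff _ _ _ _).2 ⟨h, by simp [hβ]⟩
    refine ⟨.n12 (α / β), HasStructureConstants.iso2 hdim h' (hasStructureConstants_tbl.2 ?_)
      (hasStructureConstants_tbl.2 ?_)⟩ <;>
    refine ⟨?_, ?_, ?_, ?_⟩ <;>
    · simp only [map_add, map_smul, LinearMap.add_apply, LinearMap.smul_apply, huu, huv, hvu, hvv,
        nuu, nuv, nvu, nvv, Matrix.cons_val_zero, Matrix.cons_val_one, Pi.zero_apply]
      match_scalars <;> field_simp <;> ring

theorem IsPoissonCompatible_s12.exists_iso2_npMul_npCirc (hμν : IsPoissonCompatible_s12 μ ν)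
    (hdim : finrank ℂ P = 2) (hcomm : ∀ x y, μ x y = μ y x)
    (hassoc : ∀ x y z, μ (μ x y) z = μ x (μ y z)) (hμ : μ ≠ 0) :
    ∃ i, Iso2 (fun x y => μ x y) (fun x y => ν x y) (tm (npMul i)) (tm (npCirc i)) := by
  obtain ⟨u, v, h, hμ | hμ | hμ | hμ⟩ :=
    exists_hasStructureConstants_of_comm_assoc hdim hcomm hassoc hμ
  · exact hμν.exists_iso2_of_cA01 hdim h hμ
  · exact hμν.exists_iso2_of_cA02 hdim hcomm h hμ
  · exact hμν.exists_iso2_of_cA03 hdim h hμ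
  · exact hμν.exists_iso2_of_cA04 hdim hcomm h hμ

theorem IsPreLie.exists_iso1_novAlg_of_comm (hν : IsPreLie ν) (hdim : finrank ℂ P = 2)
    (hcomm : ∀ x y, ν x y = ν y x) (hν₀ : ν ≠ 0) :
    ∃ i, Iso1 (fun x y => ν x y) (tm (novAlg i)) := by
  have hassoc (x y z) : ν (ν x y) z = ν x (ν y z) := by
    have hxz : ν x (ν z y) = ν z (ν x y) := by
      rw [← sub_eq_zero, ← hν, hcomm z x, sub_self]
    rw [hcomm (ν x y) z, hcomm y z, hxz]
  obtain ⟨u, v, h, hν | hν | hν | hν⟩ :=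
    exists_hasStructureConstants_of_comm_assoc hdim hcomm hassoc hν₀ <;>
  obtain ⟨huu, huv, hvu, hvv⟩ := hasStructureConstants_tbl.1 hν
  · exact ⟨Sum.inl 2, iso1_tbl hdim h huu huv hvu hvv⟩
  · refine ⟨Sum.inr 1, iso1_tbl hdim (LinearIndependent.pair_symm_iff.1 h) ?_ ?_ ?_ ?_⟩ <;>
      simp [huu, huv, hvu, hvv]
  · exact ⟨Sum.inl 3, iso1_tbl hdim h huu huv hvu hvv⟩
  · exact ⟨Sum.inl 0, iso1_tbl hdim h huu huv hvu hvv⟩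

theorem iso1_P02_of_circ_self_eq_smul (hdim : finrank ℂ P = 2) {a : ℂ} (ha : a ≠ 0)
    (h : LinearIndependent ℂ ![u, w]) (huu : ν u u = a • w) (huw : ν u w = 0)
    (hwu : ν w u = -u) (hww : ν w w = (-2 : ℂ) • w) :
    Iso1 (fun x y => ν x y) (tm (tbl ![0,1] 0 ![-1,0] ![0,-2])) := by
  obtain ⟨r, rfl⟩ := IsAlgClosed.exists_eq_mul_self a
  have hr : r ≠ 0 := left_ne_zero_of_mul ha
  have h' : LinearIndependent ℂ ![r⁻¹ • u, w] := by
    simpa using (LinearIndependent.pair_smul_smul_iff (inv_ne_zero hr).isUnit isUnit_one).2 h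
  refine iso1_tbl hdim h' ?_ ?_ ?_ ?_ <;> simp [huu, huw, hwu, hww, smul_smul, hr]

theorem iso1_novAlg_or_P01_or_P03_of_circ_eq_zero (hdim : finrank ℂ P = 2) {r d : ℂ}
    (h : LinearIndependent ℂ ![u, v]) (huu : ν u u = 0) (huv : ν u v = 0) (hvu : ν v u = -u)
    (hvv : ν v v = r • u + d • v) :
    (∃ i, Iso1 (fun x y => ν x y) (tm (novAlg i))) ∨
      (∃ α : ℂ, α ≠ 0 ∧ Iso1 (fun x y => ν x y) (tm (tbl 0 0 ![-1,0] ![0,α]))) ∨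
      Iso1 (fun x y => ν x y) (tm (tbl 0 0 ![-1,0] ![1,-1])) := by
  obtain ⟨u, v, h, huu, huv, hvu, hvv | ⟨hd, hvv⟩⟩ :=
    exists_circ_self_eq_smul_or_resonant (p := 0) (c := -1) h huu (by simpa using huv)
      (by simpa using hvu) hvv
  · by_cases hd : d = 0
    · refine Or.inl ⟨Sum.inl 1, iso1_tbl hdim h ?_ ?_ ?_ ?_⟩ <;> simp [huu, huv, hvu, hvv, hd]
    · refine Or.inr (Or.inl ⟨d, hd, iso1_tbl hdim h ?_ ?_ ?_ ?_⟩) <;>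
        simp [huu, huv, hvu, hvv]
  · refine Or.inr (Or.inr (iso1_tbl hdim h ?_ ?_ ?_ ?_)) <;> simp [huu, huv, hvu, hvv, hd]

theorem exists_iso1_novAlg_of_circ_eq_smul (hdim : finrank ℂ P = 2) {r d : ℂ} (hd : d ≠ 0)
    (h : LinearIndependent ℂ ![u, v]) (huu : ν u u = 0) (huv : ν u v = d • u)
    (hvu : ν v u = (d - 1) • u) (hvv : ν v v = r • u + d • v) :
    ∃ i, Iso1 (fun x y => ν x y) (tm (novAlg i)) := by
  obtain ⟨u, v, h, huu, huv, hvu, hvv | ⟨hres, hvv⟩⟩ :=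
    exists_circ_self_eq_smul_or_resonant h huu huv hvu hvv
  · have h' : LinearIndependent ℂ ![u, d⁻¹ • v] :=
      linearIndependent_pair_smul_right h (inv_ne_zero hd)
    refine ⟨Sum.inr (d⁻¹ * (d - 1)), iso1_tbl hdim h' ?_ ?_ ?_ ?_⟩ <;>
      simp [huu, huv, hvu, hvv, smul_smul, hd]
  · obtain rfl : d = 1 := by linear_combination -hres
    refine ⟨Sum.inl 4, iso1_tbl hdim h ?_ ?_ ?_ ?_⟩ <;> simp [huu, huv, hvu, hvv]

theorem IsPreLie.iso1_novAlg_or_P01_or_P02_or_P03_of_not_comm (hν : IsPreLie ν)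
    (hdim : finrank ℂ P = 2) (hne : ∃ x y, ν x y ≠ ν y x) :
    (∃ i, Iso1 (fun x y => ν x y) (tm (novAlg i))) ∨
      (∃ α : ℂ, α ≠ 0 ∧ Iso1 (fun x y => ν x y) (tm (tbl 0 0 ![-1,0] ![0,α]))) ∨
      Iso1 (fun x y => ν x y) (tm (tbl ![0,1] 0 ![-1,0] ![0,-2])) ∨
      Iso1 (fun x y => ν x y) (tm (tbl 0 0 ![-1,0] ![1,-1])) := by
  obtain ⟨u, v, h, hcommutator⟩ := exists_linearIndependent_commutator_eq hdim hne
  by_cases huu : ν u u = 0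
  · obtain ⟨p, r, d, huv, hvu, hvv, hp⟩ :=
      hν.exists_normalForm_of_circ_self_eq_zero hdim h hcommutator huu
    by_cases hp₀ : p = 0
    · subst hp₀
      obtain hN | hP01 | hP03 :=
        iso1_novAlg_or_P01_or_P03_of_circ_eq_zero hdim h huu (by simpa using huv)
          (by simpa using hvu) hvv
      · exact Or.inl hN
      · exact Or.inr (Or.inl hP01)
      · exact Or.inr (Or.inr (Or.inr hP03))
    · obtain rfl := hp.resolve_left hp₀
      exact Or.inl (exists_iso1_novAlg_of_circ_eq_smul hdim hp₀ h huu huv hvu hvv)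
  · obtain ⟨a, w, ha, h', huu', huw, hwu, hww⟩ :=
      hν.exists_normalForm_of_circ_self_ne_zero hdim h hcommutator huu
    exact Or.inr (Or.inr (Or.inl (iso1_P02_of_circ_self_eq_smul hdim ha h' huu' huw hwu hww)))

end ComplexClassification

/-- Every nonzero 2-dimensional pre-Lie Poisson algebra over ℂ is
isomorphic to one of the Novikov–Poisson algebras (N01–N06^γ with `· ≡ 0`, or N07–N14),
or to one of the pre-Lie (non-Novikov) algebras P01^α (α ≠ 0), P02, P03 with `· ≡ 0`. -/
theorem statement12 (P : Type*) [AddCommGroup P] [Module ℂ P]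
    (hdim : Module.finrank ℂ P = 2)
    (mul circ : P →ₗ[ℂ] P →ₗ[ℂ] P)
    (hcomm : ∀ x y : P, mul x y = mul y x)
    (hassoc : ∀ x y z : P, mul (mul x y) z = mul x (mul y z))
    (hpre : ∀ x y z : P, circ (circ x y) z - circ (circ y x) z =
      circ x (circ y z) - circ y (circ x z))
    (hcompat₁ : ∀ x y z : P, mul (circ x y) z - mul (circ y x) z =
      circ x (mul y z) - circ y (mul x z))
    (hcompat₂ : ∀ x y z : P, circ (mul x y) z = mul x (circ y z))
    (hnz : (∃ x y : P, mul x y ≠ 0) ∨ (∃ x y : P, circ x y ≠ 0)) :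
    (∃ i : Fin 5 ⊕ ℂ, Iso2 (fun x y => mul x y) (fun x y => circ x y)
        zm (tm (novAlg i))) ∨
    (∃ i : NPIdx, Iso2 (fun x y => mul x y) (fun x y => circ x y)
        (tm (npMul i)) (tm (npCirc i))) ∨
    -- P01^α, α ≠ 0 : e2∘e1 = -e1, e2∘e2 = α e2
    (∃ α : ℂ, α ≠ 0 ∧ Iso2 (fun x y => mul x y) (fun x y => circ x y)
        zm (tm (tbl 0 0 ![-1,0] ![0,α]))) ∨
    -- P02 : e1∘e1 = e2, e2∘e1 = -e1, e2∘e2 = -2e2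
    Iso2 (fun x y => mul x y) (fun x y => circ x y)
        zm (tm (tbl ![0,1] 0 ![-1,0] ![0,-2])) ∨
    -- P03 : e2∘e1 = -e1, e2∘e2 = e1 - e2
    Iso2 (fun x y => mul x y) (fun x y => circ x y)
        zm (tm (tbl 0 0 ![-1,0] ![1,-1])) := by
  by_cases hmul : mul = 0
  · subst hmul
    have hcirc : circ ≠ 0 := by
      rintro rfl
      simp at hnz
    by_cases hc : ∀ x y, circ x y = circ y x
    · obtain ⟨i, hi⟩ := IsPreLie.exists_iso1_novAlg_of_comm hpre hdim hc hcirc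
      exact Or.inl ⟨i, iso2_zm_of_iso1 hi⟩
    · push Not at hc
      obtain ⟨i, hi⟩ | ⟨α, hα, hP01⟩ | hP02 | hP03 :=
        IsPreLie.iso1_novAlg_or_P01_or_P02_or_P03_of_not_comm hpre hdim hc
      · exact Or.inl ⟨i, iso2_zm_of_iso1 hi⟩
      · exact Or.inr (Or.inr (Or.inl ⟨α, hα, iso2_zm_of_iso1 hP01⟩))
      · exact Or.inr (Or.inr (Or.inr (Or.inl (iso2_zm_of_iso1 hP02))))
      · exact Or.inr (Or.inr (Or.inr (Or.inr (iso2_zm_of_iso1 hP03))))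
  · exact Or.inr (Or.inl
      (IsPoissonCompatible_s12.exists_iso2_npMul_npCirc ⟨hcompat₁, hcompat₂⟩ hdim hcomm hassoc hmul))
end
end
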